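/- Let μ ≥ 0 and let S : ℤ³ → ℂ be a kernel satisfying: S(k,m,n) = 0 whenever kmn = 0; S(k,m,n) = conj(S(−k,−m,−n)); S(k,m,n) = S(k,n,m); S(k,m,n) = S(m,n,k); S(ηk,ηm,ηn) = η^μ S(k,m,n) for every positive integer η; and the bound |S(k,m,n)| ≤ C·min{|k|^μ, |m|^μ, |n|^μ} for some constant C > 0 and all k,m,n ∈ ℤ. Let s > μ + 3/2, let C_s be a constant such that |k|k|^{2s} + m|m|^{2s} + n|n|^{2s}| ≤ C_s(|k|^s|m|^s|n| + |n|^s|k|^s|m| + |m|^s|n|^s|k|) for all real k,m,n with k+m+n = 0, and set K_s = C·C_s·M_{s−μ−1} where M_σ = (2 Σ_{n=1}^∞ n^{−2σ})^{1/2}. Then for every f ∈ Ḣ^s(𝕋), the initial-value problem u_t + a(u,u)_x = 0, u(·,0) = f — equivalently, in Fourier coefficients, ∂_t û(k,t) + ik Σ_{n∈ℤ} S(−k, k−n, n) û(k−n,t) û(n,t) = 0 — has a unique solution u ∈ C(I; Ḣ^s(𝕋)) ∩ C¹(I; Ḣ^{s−1}(𝕋)) on the time interval I = (−t₊, t₊)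 with t₊ = 1/(K_s ‖f‖_s). -/

import Mathlib

open scoped BigOperators
open Filter

/-- The homogeneous Sobolev norm of order `s` of a Fourier coefficient sequence. -/
noncomputable def hnorm (s : ℝ) (u : ℤ → ℂ) : ℝ :=
  (∑' k : ℤ, |(k : ℝ)| ^ (2 * s) * ‖u k‖ ^ 2) ^ ((1 : ℝ) / 2)

/-- Membership in the homogeneous Sobolev space `Ḣ^s(𝕋)` (zero mean, real-valued,
finite `Ḣ^s` norm), in terms of Fourier coefficients. -/
def InHs (s : ℝ) (u : ℤ → ℂ) : Prop :=
  u 0 = 0 ∧ (∀ k : ℤ, u (-k) = starRingEnd ℂ (u k)) ∧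
    Summable fun k : ℤ => |(k : ℝ)| ^ (2 * s) * ‖u k‖ ^ 2

/-- `M_σ = (2 Σ_{n=1}^∞ n^{−2σ})^{1/2}`. -/
noncomputable def Mconst (σ : ℝ) : ℝ :=
  Real.sqrt (2 * ∑' n : ℕ, ((n : ℝ) + 1) ^ (-(2 * σ)))

/-- The Fourier coefficients of the bilinear form `a(u,v)` determined by the kernel `S`. -/
noncomputable def aHat (S : ℤ → ℤ → ℤ → ℂ) (u v : ℤ → ℂ) (k : ℤ) : ℂ :=
  ∑' n : ℤ, S (-k) (k - n) n * u (k - n) * v n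

/-- Continuity of `t ↦ u(·,t)` on `I` with values in `Ḣ^s`. -/
def HsContOn (s : ℝ) (u : ℝ → ℤ → ℂ) (I : Set ℝ) : Prop :=
  ∀ t₀ ∈ I, Tendsto (fun t => hnorm s fun k => u t k - u t₀ k) (nhdsWithin t₀ I) (nhds 0)

/-- `u` is a solution of `u_t + a(u,u)_x = 0` on the time interval `I`,
belonging to `C(I; Ḣ^s) ∩ C¹(I; Ḣ^{s-1})`. -/
def IsSolution (S : ℤ → ℤ → ℤ → ℂ) (s : ℝ) (I : Set ℝ) (u : ℝ → ℤ → ℂ) : Prop :=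
  (∀ t ∈ I, InHs s (u t)) ∧ HsContOn s u I ∧
    (∀ t ∈ I, ∀ k : ℤ, HasDerivAt (fun τ => u τ k)
      (-(Complex.I * (k : ℂ) * aHat S (u t) (u t) k)) t) ∧
    (∀ t ∈ I, InHs (s - 1) fun k => -(Complex.I * (k : ℂ) * aHat S (u t) (u t) k)) ∧
    HsContOn (s - 1) (fun t k => -(Complex.I * (k : ℂ) * aHat S (u t) (u t) k)) I

/-!
Galerkin truncation keeps the reality and the symmetries of the kernel `S`, so pairing the equation
with `|k|^{2s} û(-k)` and symmetrizing over the triads `k + m + n = 0` produces the factor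
`k|k|^{2s} + m|m|^{2s} + n|n|^{2s}`. Its cancellation recovers the derivative in the equation and
yields `|d/dt ‖u‖_s²| ≤ 2 K_s ‖u‖_s³`, a Riccati inequality bounding the approximations on compact
subintervals of `|t| < 1 / (K_s ‖f‖_s)`. The same symmetrization, applied in `L²` to the difference
of two solutions up to a truncation error, gives a Gronwall estimate, hence both the convergence of
the approximations and uniqueness. The limit is weakly continuous in `Ḣ^s`; restarting the Riccati
bound at each time gives `limsup ‖u(t)‖_s ≤ ‖u(t₀)‖_s`, and therefore strong continuity.
-/

/-! ### Homogeneous Sobolev sequences -/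

lemma sq_rpow_mul (s : ℝ) (k : ℤ) (x : ℝ) :
    (|(k : ℝ)| ^ s * x) ^ 2 = |(k : ℝ)| ^ (2 * s) * x ^ 2 := by
  rw [mul_pow, ← Real.rpow_mul_natCast (abs_nonneg _), Nat.cast_ofNat, mul_comm s]

lemma one_le_abs_intCast {k : ℤ} (hk : k ≠ 0) : (1 : ℝ) ≤ |(k : ℝ)| := by
  exact_mod_cast Int.one_le_abs hk

/-- The Fourier coefficient sequences of the complex-valued zero-mean functions of Sobolev
regularity `s`; `InHs s` selects the real-valued ones among them. -/
def Hs (s : ℝ) : Submodule ℂ (ℤ → ℂ) where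
  carrier := {u | u 0 = 0 ∧ Summable fun k : ℤ => |(k : ℝ)| ^ (2 * s) * ‖u k‖ ^ 2}
  zero_mem' := by simp [summable_zero]
  add_mem' := by
    rintro u v ⟨hu0, hu⟩ ⟨hv0, hv⟩
    refine ⟨by simp [hu0, hv0], ((hu.add hv).mul_left 2).of_nonneg_of_le
      (fun k => by positivity) fun k => ?_⟩
    have h : ‖u k + v k‖ ^ 2 ≤ 2 * (‖u k‖ ^ 2 + ‖v k‖ ^ 2) := by
      linarith [parallelogram_law_with_norm ℝ (u k) (v k), sq_nonneg ‖u k - v k‖]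
    calc |(k : ℝ)| ^ (2 * s) * ‖u k + v k‖ ^ 2
        ≤ |(k : ℝ)| ^ (2 * s) * (2 * (‖u k‖ ^ 2 + ‖v k‖ ^ 2)) := by gcongr
      _ = 2 * (|(k : ℝ)| ^ (2 * s) * ‖u k‖ ^ 2 + |(k : ℝ)| ^ (2 * s) * ‖v k‖ ^ 2) := by ring
  smul_mem' := by
    rintro c u ⟨hu0, hu⟩
    refine ⟨by simp [hu0], (hu.mul_left (‖c‖ ^ 2)).congr fun k => ?_⟩
    rw [Pi.smul_apply, norm_smul]
    ring

section Sobolev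

variable {s ν : ℝ} {u v : ℤ → ℂ}

lemma InHs.mem_Hs (h : InHs s u) : u ∈ Hs s := ⟨h.1, h.2.2⟩

lemma hnorm_eq_sqrt (s : ℝ) (u : ℤ → ℂ) :
    hnorm s u = √(∑' k : ℤ, |(k : ℝ)| ^ (2 * s) * ‖u k‖ ^ 2) :=
  (Real.sqrt_eq_rpow _).symm

lemma hnorm_nonneg (s : ℝ) (u : ℤ → ℂ) : 0 ≤ hnorm s u := by
  rw [hnorm_eq_sqrt]
  exact Real.sqrt_nonneg _

lemma hnorm_sq (s : ℝ) (u : ℤ → ℂ) :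
    hnorm s u ^ 2 = ∑' k : ℤ, |(k : ℝ)| ^ (2 * s) * ‖u k‖ ^ 2 := by
  rw [hnorm_eq_sqrt, Real.sq_sqrt (tsum_nonneg fun k => by positivity)]

lemma hasSum_hnorm_sq (hu : u ∈ Hs s) :
    HasSum (fun k : ℤ => |(k : ℝ)| ^ (2 * s) * ‖u k‖ ^ 2) (hnorm s u ^ 2) := by
  rw [hnorm_sq]
  exact hu.2.hasSum

lemma sum_le_hnorm_sq (hu : u ∈ Hs s) (F : Finset ℤ) :
    ∑ k ∈ F, |(k : ℝ)| ^ (2 * s) * ‖u k‖ ^ 2 ≤ hnorm s u ^ 2 :=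
  sum_le_hasSum F (fun k _ => by positivity) (hasSum_hnorm_sq hu)

lemma mem_Hs_of_sum_le {b : ℝ} (hu0 : u 0 = 0)
    (h : ∀ F : Finset ℤ, ∑ k ∈ F, |(k : ℝ)| ^ (2 * s) * ‖u k‖ ^ 2 ≤ b) : u ∈ Hs s :=
  ⟨hu0, summable_of_sum_le (fun k => by positivity) h⟩

lemma hnorm_le_of_sum_le {b : ℝ} (hb : 0 ≤ b)
    (h : ∀ F : Finset ℤ, ∑ k ∈ F, |(k : ℝ)| ^ (2 * s) * ‖u k‖ ^ 2 ≤ b ^ 2) : hnorm s u ≤ b := by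
  refine le_of_sq_le_sq ?_ hb
  rw [hnorm_sq]
  exact Real.tsum_le_of_sum_le (fun k => by positivity) h

lemma hnorm_add_le (hu : u ∈ Hs s) (hv : v ∈ Hs s) :
    hnorm s (u + v) ≤ hnorm s u + hnorm s v := by
  refine hnorm_le_of_sum_le (add_nonneg (hnorm_nonneg _ _) (hnorm_nonneg _ _)) fun F => ?_
  have cauchy_schwarz :
      ∑ k ∈ F, (|(k : ℝ)| ^ s * ‖u k‖) * (|(k : ℝ)| ^ s * ‖v k‖) ≤ hnorm s u * hnorm s v := by
    refine (Real.sum_mul_le_sqrt_mul_sqrt _ _ _).trans ?_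
    simp only [sq_rpow_mul]
    exact mul_le_mul (Real.sqrt_le_iff.2 ⟨hnorm_nonneg _ _, sum_le_hnorm_sq hu F⟩)
      (Real.sqrt_le_iff.2 ⟨hnorm_nonneg _ _, sum_le_hnorm_sq hv F⟩)
      (Real.sqrt_nonneg _) (hnorm_nonneg _ _)
  calc ∑ k ∈ F, |(k : ℝ)| ^ (2 * s) * ‖(u + v) k‖ ^ 2
      ≤ ∑ k ∈ F, (|(k : ℝ)| ^ s * (‖u k‖ + ‖v k‖)) ^ 2 := by
        simp only [sq_rpow_mul]
        gcongr
        exact norm_add_le _ _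
    _ = ∑ k ∈ F, |(k : ℝ)| ^ (2 * s) * ‖u k‖ ^ 2 + ∑ k ∈ F, |(k : ℝ)| ^ (2 * s) * ‖v k‖ ^ 2
        + 2 * ∑ k ∈ F, (|(k : ℝ)| ^ s * ‖u k‖) * (|(k : ℝ)| ^ s * ‖v k‖) := by
        simp only [← sq_rpow_mul, Finset.mul_sum, ← Finset.sum_add_distrib]
        exact Finset.sum_congr rfl fun k _ => by ring
    _ ≤ (hnorm s u + hnorm s v) ^ 2 := by
        linarith [sum_le_hnorm_sq hu F, sum_le_hnorm_sq hv F]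

lemma hnorm_neg (s : ℝ) (u : ℤ → ℂ) : hnorm s (-u) = hnorm s u := by
  simp only [hnorm, Pi.neg_apply, norm_neg]

lemma hnorm_sub_le (hu : u ∈ Hs s) (hv : v ∈ Hs s) :
    hnorm s (u - v) ≤ hnorm s u + hnorm s v := by
  rw [sub_eq_add_neg, ← hnorm_neg s v]
  exact hnorm_add_le hu (neg_mem hv)

lemma hnorm_sub_sq_add_hnorm_add_sq (hu : u ∈ Hs s) (hv : v ∈ Hs s) :
    hnorm s (u - v) ^ 2 + hnorm s (u + v) ^ 2 = 2 * (hnorm s u ^ 2 + hnorm s v ^ 2) := by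
  refine ((hasSum_hnorm_sq (sub_mem hu hv)).add (hasSum_hnorm_sq (add_mem hu hv))).unique ?_
  refine (((hasSum_hnorm_sq hu).add (hasSum_hnorm_sq hv)).mul_left 2).congr_fun fun k => ?_
  simp only [Pi.sub_apply, Pi.add_apply]
  linear_combination |(k : ℝ)| ^ (2 * s) * parallelogram_law_with_norm ℝ (u k) (v k)

lemma rpow_mul_norm_sq_mono (hνs : ν ≤ s) (hu0 : u 0 = 0) (k : ℤ) :
    |(k : ℝ)| ^ (2 * ν) * ‖u k‖ ^ 2 ≤ |(k : ℝ)| ^ (2 * s) * ‖u k‖ ^ 2 := by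
  rcases eq_or_ne k 0 with rfl | hk
  · simp [hu0]
  · have := one_le_abs_intCast hk
    gcongr

lemma Hs_antitone : Antitone Hs := fun _ _ h _ hu =>
  ⟨hu.1, hu.2.of_nonneg_of_le (fun _ => by positivity) (rpow_mul_norm_sq_mono h hu.1)⟩

lemma hnorm_mono (hνs : ν ≤ s) (hu : u ∈ Hs s) : hnorm ν u ≤ hnorm s u :=
  hnorm_le_of_sum_le (hnorm_nonneg _ _) fun F =>
    (Finset.sum_le_sum fun k _ => rpow_mul_norm_sq_mono hνs hu.1 k).trans (sum_le_hnorm_sq hu F)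

lemma norm_le_hnorm (hs : 0 ≤ s) (hu : u ∈ Hs s) (k : ℤ) : ‖u k‖ ≤ hnorm s u := by
  refine le_of_sq_le_sq (le_trans ?_ (sum_le_hnorm_sq hu {k})) (hnorm_nonneg _ _)
  simpa using rpow_mul_norm_sq_mono hs hu.1 k

lemma eq_zero_of_hnorm_eq_zero (hs : 0 ≤ s) (hu : u ∈ Hs s) (h : hnorm s u = 0) : u = 0 :=
  funext fun k => norm_le_zero_iff.1 (h ▸ norm_le_hnorm hs hu k)

/-! ### Limits of Sobolev sequences -/

section Limits

variable {ι : Type*} {l : Filter ι} {w : ι → ℤ → ℂ}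

lemma tendsto_sum_rpow_mul_norm_sq (hlim : ∀ k, Tendsto (fun i => w i k) l (nhds (u k)))
    (F : Finset ℤ) :
    Tendsto (fun i => ∑ k ∈ F, |(k : ℝ)| ^ (2 * s) * ‖w i k‖ ^ 2) l
      (nhds (∑ k ∈ F, |(k : ℝ)| ^ (2 * s) * ‖u k‖ ^ 2)) :=
  tendsto_finsetSum F fun k _ => ((hlim k).norm.pow 2).const_mul _

lemma sum_le_of_tendsto [l.NeBot] {b : ℝ} (hlim : ∀ k, Tendsto (fun i => w i k) l (nhds (u k)))
    (hw : ∀ᶠ i in l, w i ∈ Hs s ∧ hnorm s (w i) ≤ b) (F : Finset ℤ) :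
    ∑ k ∈ F, |(k : ℝ)| ^ (2 * s) * ‖u k‖ ^ 2 ≤ b ^ 2 := by
  refine le_of_tendsto (tendsto_sum_rpow_mul_norm_sq hlim F) (hw.mono fun i hi => ?_)
  exact (sum_le_hnorm_sq hi.1 F).trans (pow_le_pow_left₀ (hnorm_nonneg _ _) hi.2 2)

lemma mem_Hs_of_tendsto [l.NeBot] {b : ℝ} (hlim : ∀ k, Tendsto (fun i => w i k) l (nhds (u k)))
    (hw : ∀ᶠ i in l, w i ∈ Hs s ∧ hnorm s (w i) ≤ b) : u ∈ Hs s :=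
  mem_Hs_of_sum_le
    (tendsto_nhds_unique_of_eventuallyEq (hlim 0) tendsto_const_nhds (hw.mono fun _ hi => hi.1.1))
    (sum_le_of_tendsto hlim hw)

lemma hnorm_le_of_tendsto [l.NeBot] {b : ℝ}
    (hlim : ∀ k, Tendsto (fun i => w i k) l (nhds (u k)))
    (hw : ∀ᶠ i in l, w i ∈ Hs s ∧ hnorm s (w i) ≤ b) : hnorm s u ≤ b :=
  have ⟨_, hi⟩ := hw.exists
  hnorm_le_of_sum_le ((hnorm_nonneg _ _).trans hi.2) (sum_le_of_tendsto hlim hw)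

-- The Radon-Riesz property, from the parallelogram law: weak lower semicontinuity bounds
-- `‖w + u‖` from below by `2 ‖u‖` in the limit, which leaves no room for `‖w - u‖`.
lemma tendsto_hnorm_sub_zero {b : ι → ℝ} (hu : u ∈ Hs s)
    (hlim : ∀ k, Tendsto (fun i => w i k) l (nhds (u k)))
    (hw : ∀ᶠ i in l, w i ∈ Hs s ∧ hnorm s (w i) ≤ b i)
    (hb : Tendsto b l (nhds (hnorm s u))) :
    Tendsto (fun i => hnorm s (w i - u)) l (nhds 0) := by
  have hsum : HasSum (fun k : ℤ => |(k : ℝ)| ^ (2 * s) * ‖(u + u) k‖ ^ 2) (4 * hnorm s u ^ 2) := by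
    refine ((hasSum_hnorm_sq hu).mul_left 4).congr_fun fun k => ?_
    rw [← two_smul ℂ u, Pi.smul_apply, norm_smul, Complex.norm_ofNat]
    ring
  have hb2 : Tendsto (fun i => 2 * (b i ^ 2 + hnorm s u ^ 2)) l (nhds (4 * hnorm s u ^ 2)) := by
    convert ((hb.pow 2).add_const (hnorm s u ^ 2)).const_mul 2 using 2
    ring
  rw [tendsto_order]
  refine ⟨fun a ha => .of_forall fun i => ha.trans_le (hnorm_nonneg _ _), fun ε hε => ?_⟩
  have hε2 : 0 < ε ^ 2 / 2 := by positivity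
  obtain ⟨F, hF⟩ := (hsum.eventually (lt_mem_nhds (sub_lt_self _ hε2))).exists
  have hlow := (tendsto_sum_rpow_mul_norm_sq (s := s) (w := fun i => w i + u)
    (fun k => (hlim k).add_const (u k)) F).eventually (lt_mem_nhds hF)
  have hupp := hb2.eventually (gt_mem_nhds (lt_add_of_pos_right _ hε2))
  filter_upwards [hw, hlow, hupp] with i ⟨hmem, hle⟩ hlow hupp
  refine lt_of_pow_lt_pow_left₀ 2 hε.le ?_
  have hpar := hnorm_sub_sq_add_hnorm_add_sq hmem hu
  have hadd := sum_le_hnorm_sq (add_mem hmem hu) F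
  have hsq := pow_le_pow_left₀ (hnorm_nonneg _ _) hle 2
  linarith

end Limits

/-! ### Frequency truncation -/

/-- The frequencies of modulus at most `N`. -/
noncomputable def freqBox (N : ℕ) : Finset ℤ := Finset.Icc (-(N : ℤ)) N

lemma mem_freqBox {N : ℕ} {k : ℤ} : k ∈ freqBox N ↔ |k| ≤ N := by
  rw [freqBox, Finset.mem_Icc, abs_le]

lemma neg_mem_freqBox {N : ℕ} {k : ℤ} : -k ∈ freqBox N ↔ k ∈ freqBox N := by
  rw [mem_freqBox, mem_freqBox, abs_neg]

lemma card_freqBox (N : ℕ) : (freqBox N).card = 2 * N + 1 := by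
  rw [freqBox, Int.card_Icc]
  omega

lemma abs_intCast_le_of_mem_freqBox {N : ℕ} {k : ℤ} (hk : k ∈ freqBox N) : |(k : ℝ)| ≤ N := by
  exact_mod_cast mem_freqBox.1 hk

/-- The Fourier truncation of `u` to the frequencies of modulus at most `N`. -/
noncomputable def lowpass (N : ℕ) (u : ℤ → ℂ) : ℤ → ℂ := (freqBox N : Set ℤ).indicator u

lemma lowpass_of_mem {N : ℕ} {k : ℤ} (hk : k ∈ freqBox N) : lowpass N u k = u k :=
  Set.indicator_of_mem (Finset.mem_coe.2 hk) u

lemma lowpass_of_notMem {N : ℕ} {k : ℤ} (hk : k ∉ freqBox N) : lowpass N u k = 0 :=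
  Set.indicator_of_notMem (by rwa [Finset.mem_coe]) u

lemma lowpass_mem_Hs (N : ℕ) (hu0 : u 0 = 0) : lowpass N u ∈ Hs s := by
  refine ⟨by simp [lowpass, hu0], summable_of_ne_finset_zero (s := freqBox N) fun k hk => ?_⟩
  rw [lowpass_of_notMem hk, norm_zero, zero_pow two_ne_zero, mul_zero]

lemma hnorm_sub_lowpass_le {N : ℕ} (hN : 0 < N) (hνs : ν ≤ s) (hu : u ∈ Hs s) :
    hnorm ν (u - lowpass N u) ≤ (N : ℝ) ^ (ν - s) * hnorm s u := by
  refine hnorm_le_of_sum_le (mul_nonneg (by positivity) (hnorm_nonneg _ _)) fun F => ?_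
  rw [mul_pow]
  refine le_trans ?_ (mul_le_mul_of_nonneg_left (sum_le_hnorm_sq hu F) (sq_nonneg _))
  rw [Finset.mul_sum]
  refine Finset.sum_le_sum fun k _ => ?_
  by_cases hk : k ∈ freqBox N
  · rw [Pi.sub_apply, lowpass_of_mem hk, sub_self, norm_zero, zero_pow two_ne_zero, mul_zero]
    positivity
  have hNk : (N : ℝ) ≤ |(k : ℝ)| := by
    rw [mem_freqBox, not_le] at hk
    exact_mod_cast hk.le
  have hN' : (0 : ℝ) < N := Nat.cast_pos.2 hN
  have hdecay : |(k : ℝ)| ^ (ν - s) ≤ (N : ℝ) ^ (ν - s) :=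
    Real.rpow_le_rpow_of_nonpos hN' hNk (sub_nonpos.2 hνs)
  rw [Pi.sub_apply, lowpass_of_notMem hk, sub_zero, ← sq_rpow_mul, ← sq_rpow_mul, ← mul_pow,
    ← mul_assoc]
  gcongr
  calc |(k : ℝ)| ^ ν = |(k : ℝ)| ^ (ν - s) * |(k : ℝ)| ^ s := by
        rw [← Real.rpow_add (hN'.trans_le hNk), sub_add_cancel]
    _ ≤ (N : ℝ) ^ (ν - s) * |(k : ℝ)| ^ s := by gcongr

/-! ### The embedding of `Hs s` into weighted `ℓ¹` -/

lemma hasSum_Mconst_sq {σ : ℝ} (hσ : 1 / 2 < σ) :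
    HasSum (fun n : ℤ => |(n : ℝ)| ^ (-(2 * σ))) (Mconst σ ^ 2) := by
  have hsum : HasSum (fun n : ℕ => ((n : ℝ) + 1) ^ (-(2 * σ)))
      (∑' n : ℕ, ((n : ℝ) + 1) ^ (-(2 * σ))) := by
    refine Summable.hasSum ?_
    exact_mod_cast (summable_nat_add_iff 1).2
      (Real.summable_nat_rpow.2 (by linarith : -(2 * σ) < -1))
  have hpos (n : ℕ) : |(((n : ℤ) + 1 : ℤ) : ℝ)| = (n : ℝ) + 1 := by
    push_cast
    exact abs_of_nonneg (by positivity)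
  have hZ : HasSum (fun n : ℤ => |(n : ℝ)| ^ (-(2 * σ))) _ := HasSum.of_add_one_of_neg_add_one
    (by simpa only [hpos] using hsum) (by simpa only [Int.cast_neg, abs_neg, hpos] using hsum)
  convert hZ using 1
  rw [Mconst, Real.sq_sqrt (mul_nonneg two_pos.le (tsum_nonneg fun n => by positivity)),
    Int.cast_zero, abs_zero, Real.zero_rpow (by linarith)]
  ring

lemma Mconst_nonneg (σ : ℝ) : 0 ≤ Mconst σ := Real.sqrt_nonneg _

lemma sum_rpow_mul_norm_le (hνs : ν + 1 / 2 < s) (hu : u ∈ Hs s) (F : Finset ℤ) :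
    ∑ n ∈ F, |(n : ℝ)| ^ ν * ‖u n‖ ≤ Mconst (s - ν) * hnorm s u := by
  have hsplit (n : ℤ) : |(n : ℝ)| ^ ν * ‖u n‖ =
      |(n : ℝ)| ^ (-(s - ν)) * (|(n : ℝ)| ^ s * ‖u n‖) := by
    rcases eq_or_ne n 0 with rfl | hn
    · simp [hu.1]
    · rw [← mul_assoc, ← Real.rpow_add (by positivity), neg_sub, sub_add_cancel]
  have hweight : ∑ n ∈ F, (|(n : ℝ)| ^ (-(s - ν))) ^ 2 ≤ Mconst (s - ν) ^ 2 := by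
    have h (n : ℤ) : (|(n : ℝ)| ^ (-(s - ν))) ^ 2 = |(n : ℝ)| ^ (-(2 * (s - ν))) := by
      rw [← Real.rpow_mul_natCast (abs_nonneg _), Nat.cast_ofNat, neg_mul, mul_comm 2]
    simp only [h]
    exact sum_le_hasSum F (fun n _ => by positivity) (hasSum_Mconst_sq (by linarith))
  simp only [hsplit]
  refine (Real.sum_mul_le_sqrt_mul_sqrt _ _ _).trans ?_
  simp only [sq_rpow_mul]
  exact mul_le_mul (Real.sqrt_le_iff.2 ⟨Mconst_nonneg _, hweight⟩)
    (Real.sqrt_le_iff.2 ⟨hnorm_nonneg _ _, sum_le_hnorm_sq hu F⟩)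
    (Real.sqrt_nonneg _) (Mconst_nonneg _)

end Sobolev

/-! ### Hamiltonian kernels and the bilinear form -/

/-- The symmetries and the size bound of the interaction kernel of a Hamiltonian wave equation
of degree `μ`. -/
structure IsHamiltonianKernel (μ C : ℝ) (S : ℤ → ℤ → ℤ → ℂ) : Prop where
  conj_neg : ∀ k m n : ℤ, S k m n = starRingEnd ℂ (S (-k) (-m) (-n))
  swap_right : ∀ k m n : ℤ, S k m n = S k n m
  rotate : ∀ k m n : ℤ, S k m n = S m n k
  norm_le : ∀ k m n : ℤ, ‖S k m n‖ ≤
    C * min (|(k : ℝ)| ^ μ) (min (|(m : ℝ)| ^ μ) (|(n : ℝ)| ^ μ))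

/-- The Fourier coefficients of `-a(u,v)_x`, the polarised right-hand side of the equation. -/
noncomputable def waveForm (S : ℤ → ℤ → ℤ → ℂ) (u v : ℤ → ℂ) (k : ℤ) : ℂ :=
  -(Complex.I * (k : ℂ) * aHat S u v k)

lemma norm_waveForm (S : ℤ → ℤ → ℤ → ℂ) (u v : ℤ → ℂ) (k : ℤ) :
    ‖waveForm S u v k‖ = |(k : ℝ)| * ‖aHat S u v k‖ := by
  rw [waveForm, norm_neg, norm_mul, norm_mul, Complex.norm_I, one_mul, Complex.norm_intCast]

lemma waveForm_zero_freq (S : ℤ → ℤ → ℤ → ℂ) (u v : ℤ → ℂ) : waveForm S u v 0 = 0 := by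
  simp [waveForm]

namespace IsHamiltonianKernel

variable {μ C : ℝ} {S : ℤ → ℤ → ℤ → ℂ} (hS : IsHamiltonianKernel μ C S)
include hS

lemma swap_left (k m n : ℤ) : S k m n = S m k n := by
  rw [hS.rotate k m n, hS.swap_right m n k]

lemma const_nonneg : 0 ≤ C := by
  simpa using (norm_nonneg _).trans (hS.norm_le 1 1 1)

lemma norm_le_middle (k m n : ℤ) : ‖S k m n‖ ≤ C * |(m : ℝ)| ^ μ :=
  (hS.norm_le k m n).trans <|
    mul_le_mul_of_nonneg_left ((min_le_right _ _).trans (min_le_left _ _)) hS.const_nonneg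

lemma norm_le_right (k m n : ℤ) : ‖S k m n‖ ≤ C * |(n : ℝ)| ^ μ := by
  rw [hS.swap_right]
  exact hS.norm_le_middle k n m

lemma sum_norm_aHat_summand_le {z w : ℤ → ℂ} (hz : z ∈ Hs μ) (hw : w ∈ Hs 0) (k : ℤ)
    (F : Finset ℤ) :
    ∑ n ∈ F, ‖S (-k) (k - n) n * z (k - n) * w n‖ ≤ C * hnorm μ z * hnorm 0 w := by
  have hshift : ∑ n ∈ F, (|((k - n : ℤ) : ℝ)| ^ μ * ‖z (k - n)‖) ^ 2 ≤ hnorm μ z ^ 2 := by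
    simp only [sq_rpow_mul]
    exact sum_le_hasSum F (fun n _ => by positivity)
      ((Equiv.subLeft k).hasSum_iff.2 (hasSum_hnorm_sq hz))
  have hw2 : ∑ n ∈ F, ‖w n‖ ^ 2 ≤ hnorm 0 w ^ 2 := by
    simpa using sum_le_hnorm_sq hw F
  calc ∑ n ∈ F, ‖S (-k) (k - n) n * z (k - n) * w n‖
      ≤ ∑ n ∈ F, C * ((|((k - n : ℤ) : ℝ)| ^ μ * ‖z (k - n)‖) * ‖w n‖) := by
        refine Finset.sum_le_sum fun n _ => ?_
        rw [norm_mul, norm_mul, ← mul_assoc, ← mul_assoc]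
        gcongr
        exact hS.norm_le_middle _ _ _
    _ ≤ C * (hnorm μ z * hnorm 0 w) := by
        rw [← Finset.mul_sum]
        refine mul_le_mul_of_nonneg_left ((Real.sum_mul_le_sqrt_mul_sqrt _ _ _).trans ?_)
          hS.const_nonneg
        exact mul_le_mul (Real.sqrt_le_iff.2 ⟨hnorm_nonneg _ _, hshift⟩)
          (Real.sqrt_le_iff.2 ⟨hnorm_nonneg _ _, hw2⟩) (Real.sqrt_nonneg _) (hnorm_nonneg _ _)
    _ = C * hnorm μ z * hnorm 0 w := (mul_assoc _ _ _).symm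

lemma summable_aHat_summand {z w : ℤ → ℂ} (hz : z ∈ Hs μ) (hw : w ∈ Hs 0) (k : ℤ) :
    Summable fun n => ‖S (-k) (k - n) n * z (k - n) * w n‖ :=
  summable_of_sum_le (fun _ => norm_nonneg _) (hS.sum_norm_aHat_summand_le hz hw k)

lemma norm_waveForm_le {z w : ℤ → ℂ} (hz : z ∈ Hs μ) (hw : w ∈ Hs 0) (k : ℤ) :
    ‖waveForm S z w k‖ ≤ |(k : ℝ)| * (C * hnorm μ z * hnorm 0 w) := by
  rw [norm_waveForm]
  refine mul_le_mul_of_nonneg_left ?_ (abs_nonneg _)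
  exact (norm_tsum_le_tsum_norm (hS.summable_aHat_summand hz hw k)).trans
    (Real.tsum_le_of_sum_le (fun _ => norm_nonneg _) (hS.sum_norm_aHat_summand_le hz hw k))

lemma waveForm_comm (z w : ℤ → ℂ) : waveForm S z w = waveForm S w z := by
  have h (k : ℤ) : aHat S z w k = aHat S w z k := by
    rw [aHat, ← (Equiv.subLeft k).tsum_eq]
    refine tsum_congr fun n => ?_
    rw [Equiv.subLeft_apply, sub_sub_cancel, hS.swap_right, mul_right_comm]
  funext k
  rw [waveForm, waveForm, h]

lemma waveForm_add_right {z w w' : ℤ → ℂ} (hz : z ∈ Hs μ) (hw : w ∈ Hs 0) (hw' : w' ∈ Hs 0) :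
    waveForm S z (w + w') = waveForm S z w + waveForm S z w' := by
  have h (k : ℤ) : aHat S z (w + w') k = aHat S z w k + aHat S z w' k := by
    simp only [aHat, Pi.add_apply, mul_add]
    exact (hS.summable_aHat_summand hz hw k).of_norm.tsum_add
      (hS.summable_aHat_summand hz hw' k).of_norm
  funext k
  rw [Pi.add_apply, waveForm, waveForm, waveForm, h]
  ring

lemma waveForm_self_sub_self (hμ : 0 ≤ μ) {u v : ℤ → ℂ} (hu : u ∈ Hs μ) (hv : v ∈ Hs μ) :
    waveForm S u u - waveForm S v v = waveForm S (u + v) (u - v) := by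
  have hle := Hs_antitone hμ
  have hsum := add_mem hu hv
  have hright := hS.waveForm_add_right hsum (sub_mem (hle hu) (hle hv)) (hle hv)
  have hu_left := hS.waveForm_add_right hu (hle hu) (hle hv)
  have hv_left := hS.waveForm_add_right hv (hle hu) (hle hv)
  rw [sub_add_cancel] at hright
  rw [eq_sub_of_add_eq hright.symm, hS.waveForm_comm (u + v) u, hS.waveForm_comm (u + v) v,
    hu_left, hv_left, hS.waveForm_comm v u]
  abel

lemma waveForm_neg_freq {z w : ℤ → ℂ} (hz : ∀ k, z (-k) = starRingEnd ℂ (z k))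
    (hw : ∀ k, w (-k) = starRingEnd ℂ (w k)) (k : ℤ) :
    waveForm S z w (-k) = starRingEnd ℂ (waveForm S z w k) := by
  have h : aHat S z w (-k) = starRingEnd ℂ (aHat S z w k) := by
    rw [aHat, aHat, Complex.conj_tsum, ← (Equiv.neg ℤ).tsum_eq]
    refine tsum_congr fun n => ?_
    have hfreq : -k - -n = -(k - n) := by ring
    rw [Equiv.neg_apply, map_mul, map_mul, ← hz, ← hw, hS.conj_neg, hfreq, neg_neg, neg_neg,
      neg_neg]
  rw [waveForm, waveForm, h]
  simp only [Int.cast_neg, map_neg, map_mul, Complex.conj_I, map_intCast]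
  ring

end IsHamiltonianKernel

/-! ### The bilinear estimate in Sobolev spaces -/

section Young

variable {p q : ℤ → ℝ} {P Q : ℝ}

lemma summable_convolution_of_sq (hp : HasSum (fun n => p n ^ 2) P) (hq0 : ∀ n, 0 ≤ q n)
    (hq : HasSum q Q) (k : ℤ) : Summable fun n => p (k - n) * q n := by
  refine (hq.summable.mul_left √P).of_norm_bounded fun n => ?_
  rw [norm_mul, Real.norm_of_nonneg (hq0 n)]
  gcongr
  · exact hq0 n
  · exact Real.abs_le_sqrt (le_hasSum hp _ fun _ _ => sq_nonneg _)

lemma sum_sq_convolution_le (hp : HasSum (fun n => p n ^ 2) P) (hq0 : ∀ n, 0 ≤ q n)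
    (hq : HasSum q Q) (F : Finset ℤ) :
    ∑ k ∈ F, (∑' n, p (k - n) * q n) ^ 2 ≤ P * Q ^ 2 := by
  have hQ : 0 ≤ Q := hq.nonneg hq0
  have hsummable (k : ℤ) : Summable fun n => p (k - n) ^ 2 * q n :=
    (hq.summable.mul_left P).of_nonneg_of_le (fun n => mul_nonneg (sq_nonneg _) (hq0 n))
      fun n => mul_le_mul_of_nonneg_right (le_hasSum hp _ fun _ _ => sq_nonneg _) (hq0 n)
  have cauchy_schwarz (k : ℤ) :
      (∑' n, p (k - n) * q n) ^ 2 ≤ (∑' n, p (k - n) ^ 2 * q n) * Q := by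
    refine le_of_tendsto' ((summable_convolution_of_sq hp hq0 hq k).hasSum.pow 2) fun H => ?_
    refine (Finset.sum_sq_le_sum_mul_sum_of_sq_le_mul H
      (fun n _ => mul_nonneg (sq_nonneg (p (k - n))) (hq0 n)) (fun n _ => hq0 n)
      (fun n _ => (by ring : (p (k - n) * q n) ^ 2 = _).le)).trans ?_
    exact mul_le_mul ((hsummable k).sum_le_tsum H fun n _ => mul_nonneg (sq_nonneg _) (hq0 n))
      (sum_le_hasSum H (fun n _ => hq0 n) hq) (Finset.sum_nonneg fun n _ => hq0 n)
      (tsum_nonneg fun n => mul_nonneg (sq_nonneg _) (hq0 n))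
  have translation (n : ℤ) : ∑ k ∈ F, p (k - n) ^ 2 * q n ≤ P * q n := by
    rw [← Finset.sum_mul]
    exact mul_le_mul_of_nonneg_right (sum_le_hasSum F (fun _ _ => sq_nonneg _)
      ((Equiv.subRight n).hasSum_iff.2 hp)) (hq0 n)
  calc ∑ k ∈ F, (∑' n, p (k - n) * q n) ^ 2
      ≤ ∑ k ∈ F, (∑' n, p (k - n) ^ 2 * q n) * Q := Finset.sum_le_sum fun k _ => cauchy_schwarz k
    _ = (∑' n, ∑ k ∈ F, p (k - n) ^ 2 * q n) * Q := by
        rw [← Finset.sum_mul, Summable.tsum_finsetSum fun k _ => hsummable k]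
    _ ≤ P * Q * Q := mul_le_mul_of_nonneg_right
        (hasSum_le translation (summable_sum fun k _ => hsummable k).hasSum (hq.mul_left P)) hQ
    _ = P * Q ^ 2 := by ring

end Young

lemma rpow_abs_le_two_rpow_mul_add {s : ℝ} (hs : 0 ≤ s) (k n : ℤ) :
    |(k : ℝ)| ^ s ≤ 2 ^ s * (|((k - n : ℤ) : ℝ)| ^ s + |(n : ℝ)| ^ s) := by
  have htri : |(k : ℝ)| ≤ |((k - n : ℤ) : ℝ)| + |(n : ℝ)| := by
    simpa using abs_add_le ((k - n : ℤ) : ℝ) (n : ℝ)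
  have hmax : |(k : ℝ)| ≤ 2 * max |((k - n : ℤ) : ℝ)| |(n : ℝ)| := by
    linarith [le_max_left |((k - n : ℤ) : ℝ)| |(n : ℝ)|,
      le_max_right |((k - n : ℤ) : ℝ)| |(n : ℝ)|]
  calc |(k : ℝ)| ^ s ≤ (2 * max |((k - n : ℤ) : ℝ)| |(n : ℝ)|) ^ s := by gcongr
    _ = 2 ^ s * max (|((k - n : ℤ) : ℝ)| ^ s) (|(n : ℝ)| ^ s) := by
        rw [Real.mul_rpow zero_le_two (by positivity),
          (Real.monotoneOn_rpow_Ici_of_exponent_nonneg hs).map_max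
            (Set.mem_Ici.2 (abs_nonneg _)) (Set.mem_Ici.2 (abs_nonneg _))]
    _ ≤ 2 ^ s * (|((k - n : ℤ) : ℝ)| ^ s + |(n : ℝ)| ^ s) := by
        gcongr
        exact max_le_add_of_nonneg (by positivity) (by positivity)

lemma hasSum_sq_rpow_mul_norm {s : ℝ} {u : ℤ → ℂ} (hu : u ∈ Hs s) :
    HasSum (fun n : ℤ => (|(n : ℝ)| ^ s * ‖u n‖) ^ 2) (hnorm s u ^ 2) := by
  simpa only [sq_rpow_mul] using hasSum_hnorm_sq hu

lemma summable_rpow_mul_norm {s ν : ℝ} {u : ℤ → ℂ} (hνs : ν + 1 / 2 < s) (hu : u ∈ Hs s) :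
    Summable fun n : ℤ => |(n : ℝ)| ^ ν * ‖u n‖ :=
  summable_of_sum_le (fun _ => by positivity) (sum_rpow_mul_norm_le hνs hu)

namespace IsHamiltonianKernel

variable {μ C s : ℝ} {S : ℤ → ℤ → ℤ → ℂ} (hS : IsHamiltonianKernel μ C S)
include hS

lemma rpow_mul_norm_aHat_le (hμ : 0 ≤ μ) (hs : μ + 1 / 2 < s) {z w : ℤ → ℂ} (hz : z ∈ Hs s)
    (hw : w ∈ Hs s) (k : ℤ) :
    |(k : ℝ)| ^ s * ‖aHat S z w k‖ ≤ C * 2 ^ s *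
      ((∑' n : ℤ, |((k - n : ℤ) : ℝ)| ^ s * ‖z (k - n)‖ * (|(n : ℝ)| ^ μ * ‖w n‖)) +
        ∑' n : ℤ, |((k - n : ℤ) : ℝ)| ^ s * ‖w (k - n)‖ * (|(n : ℝ)| ^ μ * ‖z n‖)) := by
  have hconv {x y : ℤ → ℂ} (hx : x ∈ Hs s) (hy : y ∈ Hs s) :=
    summable_convolution_of_sq (hasSum_sq_rpow_mul_norm hx)
      (fun n => by positivity) (summable_rpow_mul_norm hs hy).hasSum k
  have hreflect := (Equiv.subLeft k).hasSum_iff.2 (hconv hw hz).hasSum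
  have hbound := ((hconv hz hw).hasSum.add hreflect).mul_left (C * 2 ^ s)
  have hweight : |(k : ℝ)| ^ s * ‖aHat S z w k‖ =
      ‖∑' n : ℤ, ((|(k : ℝ)| ^ s : ℝ) : ℂ) * (S (-k) (k - n) n * z (k - n) * w n)‖ := by
    rw [tsum_mul_left, norm_mul, Complex.norm_real, Real.norm_of_nonneg (by positivity), aHat]
  rw [hweight]
  refine tsum_of_norm_bounded hbound fun n => ?_
  rw [norm_mul, norm_mul, norm_mul, Complex.norm_real, Real.norm_of_nonneg (by positivity)]
  simp only [Function.comp_apply, Equiv.subLeft_apply, sub_sub_cancel]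
  have hmid := hS.norm_le_middle (-k) (k - n) n
  have hright := hS.norm_le_right (-k) (k - n) n
  calc |(k : ℝ)| ^ s * (‖S (-k) (k - n) n‖ * ‖z (k - n)‖ * ‖w n‖)
      ≤ 2 ^ s * (|((k - n : ℤ) : ℝ)| ^ s + |(n : ℝ)| ^ s) *
          (‖S (-k) (k - n) n‖ * ‖z (k - n)‖ * ‖w n‖) := by
        gcongr
        exact rpow_abs_le_two_rpow_mul_add (by linarith) k n
    _ = 2 ^ s * (|((k - n : ℤ) : ℝ)| ^ s * ‖S (-k) (k - n) n‖ +
          |(n : ℝ)| ^ s * ‖S (-k) (k - n) n‖) * (‖z (k - n)‖ * ‖w n‖) := by ring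
    _ ≤ 2 ^ s * (|((k - n : ℤ) : ℝ)| ^ s * (C * |(n : ℝ)| ^ μ) +
          |(n : ℝ)| ^ s * (C * |((k - n : ℤ) : ℝ)| ^ μ)) * (‖z (k - n)‖ * ‖w n‖) := by gcongr
    _ = _ := by ring

lemma sum_waveForm_le (hμ : 0 ≤ μ) (hs : μ + 1 / 2 < s) {z w : ℤ → ℂ} (hz : z ∈ Hs s)
    (hw : w ∈ Hs s) (F : Finset ℤ) :
    ∑ k ∈ F, |(k : ℝ)| ^ (2 * (s - 1)) * ‖waveForm S z w k‖ ^ 2 ≤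
      (2 * (C * 2 ^ s) * Mconst (s - μ) * hnorm s z * hnorm s w) ^ 2 := by
  have young {x y : ℤ → ℂ} (hx : x ∈ Hs s) (hy : y ∈ Hs s) :
      ∑ k ∈ F, (∑' n : ℤ, |((k - n : ℤ) : ℝ)| ^ s * ‖x (k - n)‖ * (|(n : ℝ)| ^ μ * ‖y n‖)) ^ 2 ≤
        hnorm s x ^ 2 * (Mconst (s - μ) * hnorm s y) ^ 2 := by
    refine (sum_sq_convolution_le (hasSum_sq_rpow_mul_norm hx) (fun n => by positivity)
      (summable_rpow_mul_norm hs hy).hasSum F).trans ?_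
    gcongr
    exact Real.tsum_le_of_sum_le (fun n => by positivity) (sum_rpow_mul_norm_le hs hy)
  have hterm (k : ℤ) : |(k : ℝ)| ^ (2 * (s - 1)) * ‖waveForm S z w k‖ ^ 2 ≤
      2 * (C * 2 ^ s) ^ 2 *
      ((∑' n : ℤ, |((k - n : ℤ) : ℝ)| ^ s * ‖z (k - n)‖ * (|(n : ℝ)| ^ μ * ‖w n‖)) ^ 2 +
        (∑' n : ℤ, |((k - n : ℤ) : ℝ)| ^ s * ‖w (k - n)‖ * (|(n : ℝ)| ^ μ * ‖z n‖)) ^ 2) := by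
    rcases eq_or_ne k 0 with rfl | hk
    · rw [waveForm_zero_freq, norm_zero, zero_pow two_ne_zero, mul_zero]
      positivity
    rw [norm_waveForm, ← sq_rpow_mul, ← mul_assoc, ← Real.rpow_add_one (by positivity),
      sub_add_cancel]
    refine (pow_le_pow_left₀ (by positivity) (hS.rpow_mul_norm_aHat_le hμ hs hz hw k) 2).trans ?_
    rw [mul_pow]
    exact (mul_le_mul_of_nonneg_left add_sq_le (sq_nonneg _)).trans_eq (by ring)
  refine (Finset.sum_le_sum fun k _ => hterm k).trans ?_
  rw [← Finset.mul_sum, Finset.sum_add_distrib]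
  refine (mul_le_mul_of_nonneg_left (add_le_add (young hz hw) (young hw hz))
    (by positivity)).trans_eq ?_
  ring

lemma waveForm_mem_Hs (hμ : 0 ≤ μ) (hs : μ + 1 / 2 < s) {z w : ℤ → ℂ} (hz : z ∈ Hs s)
    (hw : w ∈ Hs s) : waveForm S z w ∈ Hs (s - 1) :=
  mem_Hs_of_sum_le (waveForm_zero_freq S z w) (hS.sum_waveForm_le hμ hs hz hw)

lemma hnorm_waveForm_le (hμ : 0 ≤ μ) (hs : μ + 1 / 2 < s) {z w : ℤ → ℂ} (hz : z ∈ Hs s)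
    (hw : w ∈ Hs s) : hnorm (s - 1) (waveForm S z w) ≤
      2 * (C * 2 ^ s) * Mconst (s - μ) * hnorm s z * hnorm s w := by
  refine hnorm_le_of_sum_le ?_ (hS.sum_waveForm_le hμ hs hz hw)
  have := hS.const_nonneg
  have := Mconst_nonneg (s - μ)
  have := hnorm_nonneg s z
  have := hnorm_nonneg s w
  positivity

end IsHamiltonianKernel

/-! ### Sums over resonant triads -/

/-- The frequency triads `(k, m, n)` with `k + m + n = 0` and all moduli at most `N`. -/
noncomputable def resonantTriads (N : ℕ) : Finset (ℤ × ℤ × ℤ) :=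
  (freqBox N ×ˢ freqBox N ×ˢ freqBox N).filter fun p => p.1 + p.2.1 + p.2.2 = 0

/-- The sum of `f k m n` over the resonant triads `(k, m, n)` of moduli at most `N`. -/
noncomputable def triadSum {M : Type*} [AddCommMonoid M] (N : ℕ) (f : ℤ → ℤ → ℤ → M) : M :=
  ∑ p ∈ resonantTriads N, f p.1 p.2.1 p.2.2

lemma mem_resonantTriads {N : ℕ} {k m n : ℤ} : (k, m, n) ∈ resonantTriads N ↔
    (k ∈ freqBox N ∧ m ∈ freqBox N ∧ n ∈ freqBox N) ∧ k + m + n = 0 := by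
  simp only [resonantTriads, Finset.mem_filter, Finset.mem_product]

section TriadSum

variable {M : Type*} [AddCommMonoid M] {N : ℕ}

lemma triadSum_congr {f g : ℤ → ℤ → ℤ → M} (h : ∀ k m n, k + m + n = 0 → f k m n = g k m n) :
    triadSum N f = triadSum N g :=
  Finset.sum_congr rfl fun _ hp => h _ _ _ (mem_resonantTriads.1 hp).2

lemma triadSum_add (f g : ℤ → ℤ → ℤ → M) :
    triadSum N (fun k m n => f k m n + g k m n) = triadSum N f + triadSum N g :=
  Finset.sum_add_distrib

lemma triadSum_rotate (f : ℤ → ℤ → ℤ → M) :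
    triadSum N f = triadSum N fun k m n => f m n k := by
  refine Finset.sum_nbij' (fun p => (p.2.2, p.1, p.2.1)) (fun p => (p.2.1, p.2.2, p.1))
    ?_ ?_ (fun _ _ => rfl) (fun _ _ => rfl) (fun _ _ => rfl) <;>
  · rintro ⟨k, m, n⟩ h
    rw [mem_resonantTriads] at h ⊢
    exact ⟨by tauto, by linarith⟩

lemma triadSum_reverse (f : ℤ → ℤ → ℤ → M) :
    triadSum N f = triadSum N fun k m n => f n m k := by
  refine Finset.sum_nbij' (fun p => (p.2.2, p.2.1, p.1)) (fun p => (p.2.2, p.2.1, p.1))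
    ?_ ?_ (fun _ _ => rfl) (fun _ _ => rfl) (fun _ _ => rfl) <;>
  · rintro ⟨k, m, n⟩ h
    rw [mem_resonantTriads] at h ⊢
    exact ⟨by tauto, by linarith⟩

lemma triadSum_add_self_add_self (f : ℤ → ℤ → ℤ → M) :
    triadSum N f + triadSum N f + triadSum N f =
      triadSum N fun k m n => f k m n + f m n k + f n k m := by
  rw [triadSum_add, triadSum_add, ← triadSum_rotate f,
    triadSum_rotate fun k m n => f n k m]

lemma norm_triadSum_le {f : ℤ → ℤ → ℤ → ℂ} {g : ℤ → ℤ → ℤ → ℝ}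
    (h : ∀ k m n, k + m + n = 0 → ‖f k m n‖ ≤ g k m n) : ‖triadSum N f‖ ≤ triadSum N g :=
  norm_sum_le_of_le _ fun _ hp => h _ _ _ (mem_resonantTriads.1 hp).2

lemma mul_triadSum {R : Type*} [NonUnitalNonAssocSemiring R] (c : R) (f : ℤ → ℤ → ℤ → R) :
    c * triadSum N f = triadSum N fun k m n => c * f k m n :=
  Finset.mul_sum _ _ _

lemma triadSum_mul_le {a r : ℤ → ℝ} (ha : ∀ k, 0 ≤ a k) (hr : ∀ k, 0 ≤ r k) :
    triadSum N (fun k m _ => a k * r m) ≤ (∑ k ∈ freqBox N, a k) * ∑ m ∈ freqBox N, r m := by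
  rw [Finset.sum_mul_sum, ← Finset.sum_product']
  have hinj : Set.InjOn (fun p : ℤ × ℤ × ℤ => (p.1, p.2.1)) (resonantTriads N) := by
    rintro ⟨k, m, n⟩ h ⟨k', m', n'⟩ h' heq
    have := (mem_resonantTriads.1 h).2
    have := (mem_resonantTriads.1 h').2
    grind
  rw [triadSum, ← Finset.sum_image (g := fun p : ℤ × ℤ × ℤ => (p.1, p.2.1))
    (f := fun q => a q.1 * r q.2) hinj]
  refine Finset.sum_le_sum_of_subset_of_nonneg ?_ fun q _ _ => mul_nonneg (ha _) (hr _)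
  refine Finset.image_subset_iff.2 ?_
  rintro ⟨k, m, n⟩ h
  have := (mem_resonantTriads.1 h).1
  exact Finset.mk_mem_product this.1 this.2.1

-- Schur's test: by AM-GM the summand is dominated by `(f k ^ 2 + f n ^ 2) / 2 * r m`.
lemma triadSum_mul_mul_le {f r : ℤ → ℝ} (hr : ∀ k, 0 ≤ r k) :
    triadSum N (fun k m n => f k * r m * f n) ≤
      (∑ k ∈ freqBox N, f k ^ 2) * ∑ m ∈ freqBox N, r m := by
  have hdiag := triadSum_mul_le (N := N) (fun k => sq_nonneg (f k)) hr
  have hreverse := triadSum_reverse (N := N) fun k m _ => f k ^ 2 * r m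
  have hle : triadSum N (fun k m n => 2 * (f k * r m * f n)) ≤
      triadSum N fun k m n => f k ^ 2 * r m + f n ^ 2 * r m :=
    Finset.sum_le_sum fun p _ => by
      linarith [mul_le_mul_of_nonneg_right (two_mul_le_add_sq (f p.1) (f p.2.2)) (hr p.2.1)]
  rw [← mul_triadSum, triadSum_add, ← hreverse] at hle
  linarith

end TriadSum

lemma aHat_eq_sum {S : ℤ → ℤ → ℤ → ℂ} {N : ℕ} {w : ℤ → ℂ} (hw : ∀ k ∉ freqBox N, w k = 0)
    (z : ℤ → ℂ) (k : ℤ) :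
    aHat S z w k = ∑ n ∈ freqBox N, S (-k) (k - n) n * z (k - n) * w n :=
  tsum_eq_sum fun n hn => by rw [hw n hn, mul_zero]

lemma sum_freqBox_neg {M : Type*} [AddCommMonoid M] (N : ℕ) (f : ℤ → M) :
    ∑ k ∈ freqBox N, f (-k) = ∑ k ∈ freqBox N, f k :=
  Finset.sum_equiv (Equiv.neg ℤ) (fun _ => neg_mem_freqBox.symm) fun _ _ => rfl

lemma sum_sum_eq_triadSum {M : Type*} [AddCommMonoid M] {N : ℕ} {f : ℤ → ℤ → ℤ → M}
    (hf : ∀ k m n, k ∉ freqBox N ∨ n ∉ freqBox N → f k m n = 0) :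
    ∑ k ∈ freqBox N, ∑ n ∈ freqBox N, f k (-k - n) n = triadSum (2 * N) f := by
  rw [← Finset.sum_product']
  refine Finset.sum_of_injOn (fun p => (p.1, -p.1 - p.2, p.2)) ?_ ?_ ?_ fun _ _ => rfl
  · rintro ⟨k, n⟩ - ⟨k', n'⟩ - h
    simp_all
  · rintro ⟨k, n⟩ h
    simp only [Finset.coe_product, Set.mem_prod, Finset.mem_coe, mem_resonantTriads, mem_freqBox,
      abs_le] at h ⊢
    grind
  · rintro ⟨k, m, n⟩ hp himage
    refine hf k m n ?_
    by_contra! hmem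
    refine himage ⟨(k, n), by simpa using hmem, ?_⟩
    have := (mem_resonantTriads.1 hp).2
    simp only [Prod.mk.injEq, true_and, and_true]
    linarith

lemma sum_conj_mul_waveForm {S : ℤ → ℤ → ℤ → ℂ} {N : ℕ} {c : ℤ → ℝ} {u w : ℤ → ℂ}
    (hc : ∀ k, c (-k) = c k) (hconj : ∀ k, u (-k) = starRingEnd ℂ (u k))
    (hu : ∀ k ∉ freqBox N, u k = 0) (hw : ∀ k ∉ freqBox N, w k = 0) (z : ℤ → ℂ) :
    ∑ k ∈ freqBox N, (c k : ℂ) * (starRingEnd ℂ (u k) * waveForm S z w k) =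
      Complex.I * triadSum (2 * N) fun k m n =>
        ((k * c k : ℝ) : ℂ) * (S k m n * u k * z m * w n) := by
  rw [← sum_freqBox_neg, ← sum_sum_eq_triadSum, Finset.mul_sum]
  · refine Finset.sum_congr rfl fun k _ => ?_
    rw [hconj, Complex.conj_conj, hc, waveForm, aHat_eq_sum hw, neg_neg, Finset.mul_sum]
    push_cast
    simp only [Finset.mul_sum, ← Finset.sum_neg_distrib]
    exact Finset.sum_congr rfl fun n _ => by ring
  · rintro k m n (hk | hn)
    · rw [hu k hk]; ring
    · rw [hw n hn]; ring

/-! ### Energy estimates -/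

/-- The inequality defining the constant `C_s`: the resonant symbol of the `Ḣ^s` energy is bounded
by terms in which no frequency carries more than `s` derivatives. -/
def SymbolBound (s Cs : ℝ) : Prop :=
  ∀ k m n : ℝ, k + m + n = 0 →
    |k * |k| ^ (2 * s) + m * |m| ^ (2 * s) + n * |n| ^ (2 * s)| ≤
      Cs * (|k| ^ s * |m| ^ s * |n| + |n| ^ s * |k| ^ s * |m| + |m| ^ s * |n| ^ s * |k|)

lemma SymbolBound.const_nonneg {s Cs : ℝ} (h : SymbolBound s Cs) : 0 ≤ Cs := by
  have := (abs_nonneg _).trans (h 1 1 (-2) (by norm_num))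
  exact nonneg_of_mul_nonneg_left this (by positivity)

-- Averaging over the rotations of a triad turns the weight `k |k|^{2s}` into the symbol.
lemma SymbolBound.norm_triadSum_symbol_le {s Cs : ℝ} (h : SymbolBound s Cs) {P : ℤ → ℤ → ℤ → ℂ}
    (hP : ∀ k m n, P m n k = P k m n) (N : ℕ) :
    ‖triadSum N fun k m n => ((k * |(k : ℝ)| ^ (2 * s) : ℝ) : ℂ) * P k m n‖ ≤
      Cs * triadSum N fun k m n => |(k : ℝ)| ^ s * |(n : ℝ)| ^ s * |(m : ℝ)| * ‖P k m n‖ := by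
  set T := triadSum N fun k m n => ((k * |(k : ℝ)| ^ (2 * s) : ℝ) : ℂ) * P k m n
  set Y := triadSum N fun k m n => |(k : ℝ)| ^ s * |(n : ℝ)| ^ s * |(m : ℝ)| * ‖P k m n‖
  have hTY : ‖T + T + T‖ ≤ Cs * (Y + Y + Y) := by
    rw [triadSum_add_self_add_self, triadSum_add_self_add_self, mul_triadSum]
    refine norm_triadSum_le fun k m n hkmn => ?_
    have hbound := mul_le_mul_of_nonneg_right (h k m n (by exact_mod_cast hkmn))
      (norm_nonneg (P k m n))
    rw [hP k m n, ← hP n k m, ← add_mul, ← add_mul, norm_mul, ← Complex.ofReal_add,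
      ← Complex.ofReal_add, Complex.norm_real, Real.norm_eq_abs]
    exact hbound.trans_eq (by ring)
  rw [show T + T + T = 3 * T by ring, norm_mul, Complex.norm_ofNat] at hTY
  linarith

lemma hnorm_sq_eq_sum {s : ℝ} {N : ℕ} {u : ℤ → ℂ} (hu : ∀ k ∉ freqBox N, u k = 0) :
    hnorm s u ^ 2 = ∑ k ∈ freqBox N, |(k : ℝ)| ^ (2 * s) * ‖u k‖ ^ 2 := by
  rw [hnorm_sq]
  exact tsum_eq_sum fun k hk => by simp [hu k hk]

namespace IsHamiltonianKernel

variable {μ C : ℝ} {S : ℤ → ℤ → ℤ → ℂ} (hS : IsHamiltonianKernel μ C S)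
include hS

lemma reverse (k m n : ℤ) : S n m k = S k m n := by
  rw [hS.rotate, hS.swap_left]

lemma triadSum_mul_norm_le (hμ : 0 ≤ μ) {s : ℝ} (hs : μ + 3 / 2 < s) {z : ℤ → ℂ} (hz : z ∈ Hs s)
    {g : ℤ → ℝ} (hg : ∀ k, 0 ≤ g k) (w : ℤ → ℂ) (N : ℕ) :
    triadSum N (fun k m n => g k * g n * |(m : ℝ)| * ‖S k m n * w k * z m * w n‖) ≤
      C * (∑ k ∈ freqBox N, (g k * ‖w k‖) ^ 2) * (Mconst (s - μ - 1) * hnorm s z) := by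
  calc triadSum N (fun k m n => g k * g n * |(m : ℝ)| * ‖S k m n * w k * z m * w n‖)
      ≤ triadSum N fun k m n =>
          C * ((g k * ‖w k‖) * (|(m : ℝ)| ^ (1 + μ) * ‖z m‖) * (g n * ‖w n‖)) := by
        refine Finset.sum_le_sum fun ⟨k, m, n⟩ _ => ?_
        have := mul_le_mul_of_nonneg_right (hS.norm_le_middle k m n)
          (by have := hg k; have := hg n; positivity :
            0 ≤ g k * g n * |(m : ℝ)| * (‖w k‖ * ‖z m‖ * ‖w n‖))
        simp only [norm_mul, Real.rpow_one_add' (abs_nonneg _) (by positivity : 1 + μ ≠ 0)]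
        linarith
    _ ≤ C * ((∑ k ∈ freqBox N, (g k * ‖w k‖) ^ 2) * (Mconst (s - μ - 1) * hnorm s z)) := by
        have hsum := sum_rpow_mul_norm_le (ν := 1 + μ) (by linarith) hz (freqBox N)
        rw [show s - (1 + μ) = s - μ - 1 by ring] at hsum
        rw [← mul_triadSum]
        refine mul_le_mul_of_nonneg_left ((triadSum_mul_mul_le fun _ => by positivity).trans ?_)
          hS.const_nonneg
        exact mul_le_mul_of_nonneg_left hsum (Finset.sum_nonneg fun _ _ => sq_nonneg _)
    _ = _ := (mul_assoc _ _ _).symm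

-- By the symmetry `k ↔ n` of the triad sum, the derivative falls on the coefficient `z`.
lemma norm_sum_conj_mul_waveForm_le (hμ : 0 ≤ μ) {s : ℝ} (hs : μ + 3 / 2 < s) {N : ℕ}
    {z w : ℤ → ℂ} (hz : z ∈ Hs s) (hw : w ∈ Hs 0) (hconj : ∀ k, w (-k) = starRingEnd ℂ (w k))
    (hsupp : ∀ k ∉ freqBox N, w k = 0) :
    2 * ‖∑ k ∈ freqBox N, starRingEnd ℂ (w k) * waveForm S z w k‖ ≤
      C * Mconst (s - μ - 1) * hnorm s z * hnorm 0 w ^ 2 := by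
  set T := triadSum (2 * N) fun k m n => (k : ℂ) * (S k m n * w k * z m * w n) with hT
  have hsum : ∑ k ∈ freqBox N, starRingEnd ℂ (w k) * waveForm S z w k = Complex.I * T := by
    simpa using sum_conj_mul_waveForm (c := fun _ => 1) (fun _ => rfl) hconj hsupp hsupp z
  have hreverse : 2 * T = triadSum (2 * N) fun k m n => -(m : ℂ) * (S k m n * w k * z m * w n) := by
    rw [two_mul]
    nth_rw 2 [hT]
    rw [triadSum_reverse, hT, ← triadSum_add]
    refine triadSum_congr fun k m n h => ?_
    have h' : (k : ℂ) + m + n = 0 := by exact_mod_cast h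
    rw [hS.reverse k m n]
    linear_combination S k m n * w k * z m * w n * h'
  have hL2 : ∑ k ∈ freqBox (2 * N), (1 * ‖w k‖) ^ 2 ≤ hnorm 0 w ^ 2 := by
    simpa using sum_le_hnorm_sq hw (freqBox (2 * N))
  calc 2 * ‖∑ k ∈ freqBox N, starRingEnd ℂ (w k) * waveForm S z w k‖
      = ‖2 * T‖ := by simp [hsum]
    _ ≤ triadSum (2 * N) fun k m n => 1 * 1 * |(m : ℝ)| * ‖S k m n * w k * z m * w n‖ := by
        rw [hreverse]
        refine norm_triadSum_le fun k m n _ => ?_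
        rw [norm_mul, norm_neg, Complex.norm_intCast, mul_one, one_mul]
    _ ≤ C * (∑ k ∈ freqBox (2 * N), (1 * ‖w k‖) ^ 2) * (Mconst (s - μ - 1) * hnorm s z) :=
        hS.triadSum_mul_norm_le hμ hs hz (g := fun _ => 1) (fun _ => zero_le_one) w (2 * N)
    _ ≤ C * hnorm 0 w ^ 2 * (Mconst (s - μ - 1) * hnorm s z) :=
        mul_le_mul_of_nonneg_right (mul_le_mul_of_nonneg_left hL2 hS.const_nonneg)
          (mul_nonneg (Mconst_nonneg _) (hnorm_nonneg _ _))
    _ = C * Mconst (s - μ - 1) * hnorm s z * hnorm 0 w ^ 2 := by ring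

lemma norm_sum_rpow_mul_conj_mul_waveForm_self_le (hμ : 0 ≤ μ) {s Cs : ℝ} (hs : μ + 3 / 2 < s)
    (hCs : SymbolBound s Cs) {N : ℕ} {u : ℤ → ℂ} (hu : u ∈ Hs s)
    (hconj : ∀ k, u (-k) = starRingEnd ℂ (u k)) (hsupp : ∀ k ∉ freqBox N, u k = 0) :
    ‖∑ k ∈ freqBox N, ((|(k : ℝ)| ^ (2 * s) : ℝ) : ℂ) *
        (starRingEnd ℂ (u k) * waveForm S u u k)‖ ≤
      C * Cs * Mconst (s - μ - 1) * hnorm s u ^ 3 := by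
  have hHs : ∑ k ∈ freqBox (2 * N), (|(k : ℝ)| ^ s * ‖u k‖) ^ 2 ≤ hnorm s u ^ 2 := by
    simpa only [sq_rpow_mul] using sum_le_hnorm_sq hu (freqBox (2 * N))
  have hrotate (k m n : ℤ) : S m n k * u m * u n * u k = S k m n * u k * u m * u n := by
    rw [← hS.rotate]
    ring
  rw [sum_conj_mul_waveForm (fun k => by rw [Int.cast_neg, abs_neg]) hconj hsupp hsupp u,
    norm_mul, Complex.norm_I, one_mul]
  calc ‖triadSum (2 * N) fun k m n =>
        ((k * |(k : ℝ)| ^ (2 * s) : ℝ) : ℂ) * (S k m n * u k * u m * u n)‖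
      ≤ Cs * triadSum (2 * N) fun k m n =>
          |(k : ℝ)| ^ s * |(n : ℝ)| ^ s * |(m : ℝ)| * ‖S k m n * u k * u m * u n‖ :=
        hCs.norm_triadSum_symbol_le hrotate (2 * N)
    _ ≤ Cs * (C * hnorm s u ^ 2 * (Mconst (s - μ - 1) * hnorm s u)) := by
        refine mul_le_mul_of_nonneg_left ((hS.triadSum_mul_norm_le hμ hs hu
          (g := fun k => |(k : ℝ)| ^ s) (fun _ => by positivity) u (2 * N)).trans ?_)
          hCs.const_nonneg
        exact mul_le_mul_of_nonneg_right (mul_le_mul_of_nonneg_left hHs hS.const_nonneg)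
          (mul_nonneg (Mconst_nonneg _) (hnorm_nonneg _ _))
    _ = C * Cs * Mconst (s - μ - 1) * hnorm s u ^ 3 := by ring

end IsHamiltonianKernel

/-! ### Differential inequalities on symmetric intervals -/

section DifferentialInequalities

variable {E : Type*} [NormedAddCommGroup E] [NormedSpace ℝ E] {T : ℝ}

lemma hasDerivAt_comp_neg {f f' : ℝ → E} (hf : ∀ t, |t| < T → HasDerivAt f (f' t) t) (t : ℝ)
    (ht : |t| < T) : HasDerivAt (fun τ => f (-τ)) (-f' (-t)) t := by
  simpa [Function.comp_def] using (hf (-t) (by rwa [abs_neg])).scomp t (hasDerivAt_neg t)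

lemma norm_le_gronwallBound_of_nonneg {f f' : ℝ → E} {K ε : ℝ}
    (hf : ∀ t, |t| < T → HasDerivAt f (f' t) t) (h0 : f 0 = 0)
    (hbound : ∀ t, |t| < T → ‖f' t‖ ≤ K * ‖f t‖ + ε) {t : ℝ} (ht0 : 0 ≤ t) (ht : t < T) :
    ‖f t‖ ≤ gronwallBound 0 K ε t := by
  have hdom {x : ℝ} (hx : x ∈ Set.Icc 0 t) : |x| < T :=
    (abs_of_nonneg hx.1).trans_lt (hx.2.trans_lt ht)
  simpa using norm_le_gronwallBound_of_norm_deriv_right_le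
    (fun x hx => (hf x (hdom hx)).continuousAt.continuousWithinAt)
    (fun x hx => (hf x (hdom (Set.Ico_subset_Icc_self hx))).hasDerivWithinAt)
    (by rw [h0, norm_zero]) (fun x hx => hbound x (hdom (Set.Ico_subset_Icc_self hx)))
    t ⟨ht0, le_rfl⟩

lemma norm_le_gronwallBound_abs {f f' : ℝ → E} {K ε : ℝ}
    (hf : ∀ t, |t| < T → HasDerivAt f (f' t) t) (h0 : f 0 = 0)
    (hbound : ∀ t, |t| < T → ‖f' t‖ ≤ K * ‖f t‖ + ε) {t : ℝ} (ht : |t| < T) :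
    ‖f t‖ ≤ gronwallBound 0 K ε |t| := by
  rcases abs_cases t with ⟨habs, ht0⟩ | ⟨habs, ht0⟩ <;> rw [habs] at ht ⊢
  · exact norm_le_gronwallBound_of_nonneg hf h0 hbound ht0 ht
  · simpa using norm_le_gronwallBound_of_nonneg (hasDerivAt_comp_neg hf) (by simpa using h0)
      (fun τ hτ => by simpa using hbound (-τ) (by rwa [abs_neg])) (neg_nonneg.2 ht0.le) ht

/-- The solution at time `t` of the Riccati equation `x' = K x²`, `x 0 = X`, which bounds the
`Ḣ^s` norm of a solution of the wave equation. -/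
noncomputable def riccatiBound (K X t : ℝ) : ℝ := X / (1 - K * X * t)

lemma riccatiBound_nonneg {K X t : ℝ} (hX : 0 ≤ X) (ht : K * X * t < 1) :
    0 ≤ riccatiBound K X t :=
  div_nonneg hX (sub_pos.2 ht).le

lemma riccatiBound_mono {K X t t' : ℝ} (hK : 0 ≤ K) (hX : 0 ≤ X) (htt' : t ≤ t')
    (ht' : K * X * t' < 1) : riccatiBound K X t ≤ riccatiBound K X t' := by
  have := mul_le_mul_of_nonneg_left htt' (mul_nonneg hK hX)
  exact div_le_div_of_nonneg_left hX (sub_pos.2 ht') (by linarith)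

lemma hasDerivAt_riccatiBound {K X t : ℝ} (ht : K * X * t < 1) :
    HasDerivAt (riccatiBound K X) (K * riccatiBound K X t ^ 2) t := by
  have hpos := sub_pos.2 ht
  have hden : HasDerivAt (fun τ => 1 - K * X * τ) (-(K * X)) t := by
    simpa using ((hasDerivAt_id t).const_mul (K * X)).const_sub 1
  refine ((hasDerivAt_const t X).div hden hpos.ne').congr_deriv ?_
  rw [riccatiBound]
  field_simp
  ring

-- A supersolution with larger data and larger rate has strictly larger slope at a contact point.
lemma le_riccatiBound_of_lt {h g' : ℝ → ℝ} {K K' X t : ℝ} (hK : 0 ≤ K) (hKK' : K < K')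
    (hX : 0 < X) (hh : ∀ τ, 0 ≤ h τ)
    (hderiv : ∀ τ, |τ| < T → HasDerivAt (fun σ => h σ ^ 2) (g' τ) τ)
    (hbound : ∀ τ, |τ| < T → |g' τ| ≤ 2 * K * h τ ^ 3) (h0 : h 0 ≤ X) (ht0 : 0 ≤ t) (ht : t < T)
    (hblow : K' * X * t < 1) : h t ≤ riccatiBound K' X t := by
  have hdom {x : ℝ} (hx : x ∈ Set.Icc 0 t) : |x| < T :=
    (abs_of_nonneg hx.1).trans_lt (hx.2.trans_lt ht)
  have hK'X : 0 ≤ K' * X := mul_nonneg (hK.trans hKK'.le) hX.le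
  have hblow' {x : ℝ} (hx : x ∈ Set.Icc 0 t) : K' * X * x < 1 :=
    (mul_le_mul_of_nonneg_left hx.2 hK'X).trans_lt hblow
  have hsuper {x : ℝ} (hx : x ∈ Set.Icc 0 t) :
      HasDerivAt (fun τ => riccatiBound K' X τ ^ 2) (2 * K' * riccatiBound K' X x ^ 3) x :=
    ((hasDerivAt_riccatiBound (hblow' hx)).pow 2).congr_deriv (by push_cast; ring)
  have hpos {x : ℝ} (hx : x ∈ Set.Icc 0 t) : 0 < riccatiBound K' X x :=
    div_pos hX (sub_pos.2 (hblow' hx))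
  have hsq : h t ^ 2 ≤ riccatiBound K' X t ^ 2 := by
    refine image_le_of_deriv_right_lt_deriv_boundary' (a := 0) (b := t)
      (fun x hx => (hderiv x (hdom hx)).continuousAt.continuousWithinAt)
      (fun x hx => (hderiv x (hdom (Set.Ico_subset_Icc_self hx))).hasDerivWithinAt) ?_
      (fun x hx => (hsuper hx).continuousAt.continuousWithinAt)
      (fun x hx => (hsuper (Set.Ico_subset_Icc_self hx)).hasDerivWithinAt) ?_ ⟨ht0, le_rfl⟩
    · simpa [riccatiBound] using pow_le_pow_left₀ (hh 0) h0 2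
    · intro x hx hcontact
      have hx := Set.Ico_subset_Icc_self hx
      have hpow := (pow_left_inj₀ (hh x) (hpos hx).le two_ne_zero).1 hcontact
      calc g' x ≤ 2 * K * riccatiBound K' X x ^ 3 :=
            hpow ▸ (le_abs_self _).trans (hbound x (hdom hx))
        _ < 2 * K' * riccatiBound K' X x ^ 3 :=
            mul_lt_mul_of_pos_right (by linarith) (pow_pos (hpos hx) 3)
  exact le_of_sq_le_sq hsq (hpos ⟨ht0, le_rfl⟩).le

lemma le_riccatiBound_of_nonneg {h g' : ℝ → ℝ} {K X t : ℝ} (hK : 0 ≤ K) (hX : 0 ≤ X)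
    (hh : ∀ τ, 0 ≤ h τ) (hderiv : ∀ τ, |τ| < T → HasDerivAt (fun σ => h σ ^ 2) (g' τ) τ)
    (hbound : ∀ τ, |τ| < T → |g' τ| ≤ 2 * K * h τ ^ 3) (h0 : h 0 ≤ X) (ht0 : 0 ≤ t) (ht : t < T)
    (hblow : K * X * t < 1) : h t ≤ riccatiBound K X t := by
  have hlim : Tendsto (fun ε : ℝ => (K + ε) * (X + ε) * t) (nhds 0) (nhds (K * X * t)) := by
    simpa using (by fun_prop : Continuous fun ε : ℝ => (K + ε) * (X + ε) * t).tendsto 0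
  have hbdd : Tendsto (fun ε : ℝ => riccatiBound (K + ε) (X + ε) t) (nhds 0)
      (nhds (riccatiBound K X t)) :=
    Tendsto.div (by simpa using (continuous_const_add X).tendsto 0) (hlim.const_sub 1)
      (sub_pos.2 hblow).ne'
  refine ge_of_tendsto (hbdd.mono_left (nhdsWithin_le_nhds (s := Set.Ioi 0))) ?_
  filter_upwards [self_mem_nhdsWithin,
    nhdsWithin_le_nhds (hlim.eventually_lt_const hblow)] with ε hε hblowε
  exact le_riccatiBound_of_lt hK (lt_add_of_pos_right K hε) (add_pos_of_nonneg_of_pos hX hε) hh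
    hderiv hbound (h0.trans (le_add_of_nonneg_right (le_of_lt hε))) ht0 ht hblowε

lemma le_riccatiBound_abs {h g' : ℝ → ℝ} {K X t : ℝ} (hK : 0 ≤ K) (hX : 0 ≤ X)
    (hh : ∀ τ, 0 ≤ h τ) (hderiv : ∀ τ, |τ| < T → HasDerivAt (fun σ => h σ ^ 2) (g' τ) τ)
    (hbound : ∀ τ, |τ| < T → |g' τ| ≤ 2 * K * h τ ^ 3) (h0 : h 0 ≤ X) (ht : |t| < T)
    (hblow : K * X * |t| < 1) : h t ≤ riccatiBound K X |t| := by
  rcases abs_cases t with ⟨habs, ht0⟩ | ⟨habs, ht0⟩ <;> rw [habs] at ht hblow ⊢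
  · exact le_riccatiBound_of_nonneg hK hX hh hderiv hbound h0 ht0 ht hblow
  · simpa using le_riccatiBound_of_nonneg hK hX (fun τ => hh (-τ)) (hasDerivAt_comp_neg hderiv)
      (fun τ hτ => by simpa using hbound (-τ) (by rwa [abs_neg])) (by simpa using h0)
      (neg_nonneg.2 ht0.le) ht hblow

end DifferentialInequalities

/-! ### Ordinary differential equations in finite dimensions -/

lemma exists_hasDerivAt_smul_cutoff {E : Type*} [NormedAddCommGroup E] [NormedSpace ℝ E]
    [FiniteDimensional ℝ E] {F : E → E} (hF : ContDiff ℝ 1 F) (x₀ : E) {R T : ℝ} (hR : 0 < R)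
    (hT : 0 < T) :
    ∃ (α : ℝ → E) (χ : ℝ → ℝ), α 0 = x₀ ∧ (∀ t, 0 ≤ χ t) ∧ (∀ t, χ t ≤ 1) ∧
      (∀ t, ‖α t‖ ≤ R → χ t = 1) ∧ ∀ t, |t| < T → HasDerivAt α (χ t • F (α t)) t := by
  have : CompleteSpace E := FiniteDimensional.complete ℝ E
  let b : ContDiffBump (0 : E) := ⟨R, R + 1, hR, by linarith⟩
  have hsupp : HasCompactSupport (fun x => b x • F x) := b.hasCompactSupport.smul_right
  have hcont : ContDiff ℝ 1 (fun x => b x • F x) := b.contDiff.smul hF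
  obtain ⟨K, hK⟩ := hcont.lipschitzWith_of_hasCompactSupport hsupp one_ne_zero
  obtain ⟨L, hL⟩ := hsupp.exists_bound_of_continuous hcont.continuous
  have hL0 : 0 ≤ L := (norm_nonneg _).trans (hL 0)
  have hzero : (0 : ℝ) ∈ Set.Icc (-T) T := ⟨by linarith, hT.le⟩
  have hpicard : IsPicardLindelof (fun _ x => b x • F x) (⟨0, hzero⟩ : Set.Icc (-T) T) x₀
      ⟨L * T, by positivity⟩ 0 ⟨L, hL0⟩ K :=
    IsPicardLindelof.of_time_independent (fun x _ => hL x) hK.lipschitzOnWith (by simp; rfl)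
  obtain ⟨α, hα0, hα⟩ := hpicard.exists_eq_forall_mem_Icc_hasDerivWithinAt₀
  refine ⟨α, fun t => b (α t), hα0, fun _ => b.nonneg, fun _ => b.le_one, fun t ht => ?_,
    fun t ht => ?_⟩
  · exact b.one_of_mem_closedBall (by simpa [b] using ht)
  · have ht := abs_lt.1 ht
    exact (hα t ⟨ht.1.le, ht.2.le⟩).hasDerivAt (Icc_mem_nhds ht.1 ht.2)

/-! ### Stability in `L²` -/

lemma hasDerivAt_hnorm_sq {s t : ℝ} {N : ℕ} {w : ℝ → ℤ → ℂ} {w' : ℤ → ℂ}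
    (hsupp : ∀ τ, ∀ k ∉ freqBox N, w τ k = 0)
    (hw : ∀ k ∈ freqBox N, HasDerivAt (fun τ => w τ k) (w' k) t) :
    HasDerivAt (fun τ => hnorm s (w τ) ^ 2) (2 * (∑ k ∈ freqBox N,
      ((|(k : ℝ)| ^ (2 * s) : ℝ) : ℂ) * (starRingEnd ℂ (w t k) * w' k)).re) t := by
  simp only [hnorm_sq_eq_sum (hsupp _), Complex.re_sum, Complex.re_ofReal_mul, Finset.mul_sum]
  refine HasDerivAt.fun_sum fun k hk => ((hw k hk).norm_sq.const_mul _).congr_deriv ?_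
  rw [Complex.inner, mul_left_comm, mul_comm (w' k)]

lemma lowpass_neg_freq {u : ℤ → ℂ} (hconj : ∀ k, u (-k) = starRingEnd ℂ (u k)) (N : ℕ) (k : ℤ) :
    lowpass N u (-k) = starRingEnd ℂ (lowpass N u k) := by
  by_cases hk : k ∈ freqBox N
  · rw [lowpass_of_mem (neg_mem_freqBox.2 hk), lowpass_of_mem hk, hconj]
  · rw [lowpass_of_notMem (neg_mem_freqBox.not.2 hk), lowpass_of_notMem hk, map_zero]

/-- The `L²` energy production caused by the frequencies above `N` of the difference of two
functions of `Ḣ^s` norm at most `b`. -/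
noncomputable def truncationError (C s b : ℝ) (N : ℕ) : ℝ :=
  (2 * N + 1) * (N * (C * b * (N ^ (-s) * b))) ^ 2

lemma truncationError_nonneg (C s b : ℝ) (N : ℕ) : 0 ≤ truncationError C s b N := by
  unfold truncationError
  positivity

lemma tendsto_truncationError (C b : ℝ) {s : ℝ} (hs : 3 / 2 < s) :
    Tendsto (truncationError C s b) atTop (nhds 0) := by
  have hpow {a : ℝ} (ha : 0 < a) : Tendsto (fun N : ℕ => (N : ℝ) ^ (-a)) atTop (nhds 0) :=
    (tendsto_rpow_neg_atTop ha).comp tendsto_natCast_atTop_atTop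
  have hlim := (((hpow (by linarith : 0 < 2 * s - 3)).const_mul 2).add
    (hpow (by linarith : 0 < 2 * s - 2))).mul_const ((C * b * b) ^ 2)
  rw [mul_zero, add_zero, zero_mul] at hlim
  refine hlim.congr' ?_
  filter_upwards [eventually_gt_atTop 0] with N hN
  have hN : (0 : ℝ) < N := Nat.cast_pos.2 hN
  have hthree : (N : ℝ) ^ (-(2 * s - 3)) = N ^ 3 * (N ^ (-s)) ^ 2 := by
    rw [← Real.rpow_natCast, ← Real.rpow_natCast, ← Real.rpow_mul hN.le, ← Real.rpow_add hN]
    push_cast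
    ring_nf
  have htwo : (N : ℝ) ^ (-(2 * s - 2)) = N ^ 2 * (N ^ (-s)) ^ 2 := by
    rw [← Real.rpow_natCast, ← Real.rpow_natCast, ← Real.rpow_mul hN.le, ← Real.rpow_add hN]
    push_cast
    ring_nf
  rw [hthree, htwo, truncationError]
  ring

/-- A curve bounded by `B` in `Ḣ^s` for `|t| < T` whose Fourier modes with frequency in `F` obey
the wave equation. With `F = Set.univ` it is a solution, with `F` a frequency box it covers the
Galerkin approximations. -/
structure SolvesModes (S : ℤ → ℤ → ℤ → ℂ) (s : ℝ) (F : Set ℤ) (B T : ℝ) (u : ℝ → ℤ → ℂ) :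
    Prop where
  mem : ∀ t, |t| < T → InHs s (u t)
  norm_le : ∀ t, |t| < T → hnorm s (u t) ≤ B
  hasDerivAt : ∀ t, |t| < T → ∀ k ∈ F,
    HasDerivAt (fun τ => u τ k) (waveForm S (u t) (u t) k) t

namespace SolvesModes

variable {S : ℤ → ℤ → ℤ → ℂ} {s B T : ℝ} {F : Set ℤ} {u v : ℝ → ℤ → ℂ}

lemma mono {F' : Set ℤ} {B' T' : ℝ} (hu : SolvesModes S s F B T u) (hF : F' ⊆ F) (hB : B ≤ B')
    (hT : T' ≤ T) : SolvesModes S s F' B' T' u where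
  mem t ht := hu.mem t (ht.trans_le hT)
  norm_le t ht := (hu.norm_le t (ht.trans_le hT)).trans hB
  hasDerivAt t ht k hk := hu.hasDerivAt t (ht.trans_le hT) k (hF hk)

lemma shift (hu : SolvesModes S s F B T u) {t₀ T' : ℝ} (hT : |t₀| + T' ≤ T) :
    SolvesModes S s F B T' fun t => u (t₀ + t) := by
  have hdom {t : ℝ} (ht : |t| < T') : |t₀ + t| < T :=
    (abs_add_le t₀ t).trans_lt (by linarith)
  exact ⟨fun t ht => hu.mem _ (hdom ht), fun t ht => hu.norm_le _ (hdom ht),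
    fun t ht k hk => (hu.hasDerivAt _ (hdom ht) k hk).comp_const_add t₀ t⟩

lemma hnorm_add_le (hu : SolvesModes S s F B T u) (hv : SolvesModes S s F B T v) {t : ℝ}
    (ht : |t| < T) : hnorm s (u t + v t) ≤ 2 * B := by
  linarith [_root_.hnorm_add_le (hu.mem t ht).mem_Hs (hv.mem t ht).mem_Hs, hu.norm_le t ht,
    hv.norm_le t ht]

lemma hnorm_sub_le (hu : SolvesModes S s F B T u) (hv : SolvesModes S s F B T v) {t : ℝ}
    (ht : |t| < T) : hnorm s (u t - v t) ≤ 2 * B := by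
  linarith [_root_.hnorm_sub_le (hu.mem t ht).mem_Hs (hv.mem t ht).mem_Hs, hu.norm_le t ht,
    hv.norm_le t ht]

end SolvesModes

/-- A bound for the `L²` distance, up to time `T`, of two curves of `Ḣ^s` norm at most `B` that
start at the same point and solve the modes with frequencies up to `N`. -/
noncomputable def stabilityBound (μ C s B T : ℝ) (N : ℕ) : ℝ :=
  √(gronwallBound 0 (C * Mconst (s - μ - 1) * (2 * B) + 1) (truncationError C s (2 * B) N) T) +
    N ^ (-s) * (2 * B)

lemma tendsto_stabilityBound (μ C B T : ℝ) {s : ℝ} (hs : 3 / 2 < s) :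
    Tendsto (stabilityBound μ C s B T) atTop (nhds 0) := by
  have hgronwall := ((Real.continuous_sqrt.comp (gronwallBound_continuous_ε 0
    (C * Mconst (s - μ - 1) * (2 * B) + 1) T)).tendsto 0).comp
      (tendsto_truncationError C (2 * B) hs)
  have hpow : Tendsto (fun N : ℕ => (N : ℝ) ^ (-s)) atTop (nhds 0) :=
    (tendsto_rpow_neg_atTop (by linarith)).comp tendsto_natCast_atTop_atTop
  have hlim := hgronwall.add (hpow.mul_const (2 * B))
  simp only [Function.comp_apply, gronwallBound_ε0_δ0, Real.sqrt_zero, zero_mul, add_zero] at hlim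
  exact hlim

namespace IsHamiltonianKernel

variable {μ C : ℝ} {S : ℤ → ℤ → ℤ → ℂ} (hS : IsHamiltonianKernel μ C S)
include hS

lemma norm_waveForm_sub_lowpass_le (hμ : 0 ≤ μ) {s : ℝ} (hμs : μ ≤ s) {N : ℕ} (hN : 0 < N)
    {z w : ℤ → ℂ} (hz : z ∈ Hs s) (hw : w ∈ Hs s) {b : ℝ} (hzb : hnorm s z ≤ b)
    (hwb : hnorm s w ≤ b) {k : ℤ} (hk : k ∈ freqBox N) :
    ‖waveForm S z (w - lowpass N w) k‖ ≤ N * (C * b * (N ^ (-s) * b)) := by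
  have hs := hμ.trans hμs
  have htail : hnorm 0 (w - lowpass N w) ≤ N ^ (-s) * b := by
    have := hnorm_sub_lowpass_le hN hs hw
    rw [zero_sub] at this
    exact this.trans (mul_le_mul_of_nonneg_left hwb (by positivity))
  have hb := (hnorm_nonneg _ _).trans hzb
  have hC := hS.const_nonneg
  refine (hS.norm_waveForm_le (Hs_antitone hμs hz)
    (sub_mem (Hs_antitone hs hw) (lowpass_mem_Hs N hw.1)) k).trans ?_
  have := abs_intCast_le_of_mem_freqBox hk
  have := (hnorm_mono hμs hz).trans hzb
  have := hnorm_nonneg 0 (w - lowpass N w)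
  have := hnorm_nonneg μ z
  gcongr

lemma norm_sum_conj_lowpass_mul_waveForm_le (hμ : 0 ≤ μ) {s : ℝ} (hs : μ + 3 / 2 < s) {N : ℕ}
    (hN : 0 < N) {z w : ℤ → ℂ} (hz : z ∈ Hs s) (hw : w ∈ Hs s)
    (hconj : ∀ k, w (-k) = starRingEnd ℂ (w k)) {b : ℝ} (hzb : hnorm s z ≤ b)
    (hwb : hnorm s w ≤ b) :
    2 * ‖∑ k ∈ freqBox N, starRingEnd ℂ (lowpass N w k) * waveForm S z w k‖ ≤
      (C * Mconst (s - μ - 1) * b + 1) * hnorm 0 (lowpass N w) ^ 2 + truncationError C s b N := by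
  have hlow : lowpass N w ∈ Hs 0 := lowpass_mem_Hs N hw.1
  have hsplit : waveForm S z w =
      waveForm S z (lowpass N w) + waveForm S z (w - lowpass N w) := by
    rw [← hS.waveForm_add_right (Hs_antitone (by linarith) hz) hlow
      (sub_mem (Hs_antitone (by linarith) hw) hlow), add_sub_cancel]
  have hmain : 2 * ‖∑ k ∈ freqBox N,
      starRingEnd ℂ (lowpass N w k) * waveForm S z (lowpass N w) k‖ ≤
      C * Mconst (s - μ - 1) * b * hnorm 0 (lowpass N w) ^ 2 := by
    have hM := mul_nonneg hS.const_nonneg (Mconst_nonneg (s - μ - 1))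
    refine (hS.norm_sum_conj_mul_waveForm_le hμ hs hz hlow (lowpass_neg_freq hconj N)
      fun k hk => lowpass_of_notMem hk).trans ?_
    gcongr
  have htail : 2 * ‖∑ k ∈ freqBox N,
      starRingEnd ℂ (lowpass N w k) * waveForm S z (w - lowpass N w) k‖ ≤
      hnorm 0 (lowpass N w) ^ 2 + truncationError C s b N := by
    calc 2 * ‖∑ k ∈ freqBox N, starRingEnd ℂ (lowpass N w k) * waveForm S z (w - lowpass N w) k‖
        ≤ ∑ k ∈ freqBox N, 2 * ‖lowpass N w k‖ * ‖waveForm S z (w - lowpass N w) k‖ := by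
          refine (mul_le_mul_of_nonneg_left (norm_sum_le _ _) zero_le_two).trans_eq ?_
          simp only [Finset.mul_sum, norm_mul, RCLike.norm_conj, mul_assoc]
      _ ≤ ∑ k ∈ freqBox N, (‖lowpass N w k‖ ^ 2 + (N * (C * b * (N ^ (-s) * b))) ^ 2) :=
          Finset.sum_le_sum fun k hk => (two_mul_le_add_sq _ _).trans <|
            add_le_add_right (pow_le_pow_left₀ (norm_nonneg _)
              (hS.norm_waveForm_sub_lowpass_le hμ (by linarith) hN hz hw hzb hwb hk) 2) _
      _ = hnorm 0 (lowpass N w) ^ 2 + truncationError C s b N := by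
          rw [Finset.sum_add_distrib, Finset.sum_const, card_freqBox,
            hnorm_sq_eq_sum fun k hk => lowpass_of_notMem hk]
          simp [truncationError]
  simp only [hsplit, Pi.add_apply, mul_add, Finset.sum_add_distrib]
  linarith [norm_add_le
    (∑ k ∈ freqBox N, starRingEnd ℂ (lowpass N w k) * waveForm S z (lowpass N w) k)
    (∑ k ∈ freqBox N, starRingEnd ℂ (lowpass N w k) * waveForm S z (w - lowpass N w) k)]

lemma hnorm_lowpass_sub_sq_le (hμ : 0 ≤ μ) {s : ℝ} (hs : μ + 3 / 2 < s) {B T : ℝ} {N : ℕ}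
    (hN : 0 < N) {u v : ℝ → ℤ → ℂ} (hu : SolvesModes S s (freqBox N) B T u)
    (hv : SolvesModes S s (freqBox N) B T v) (h0 : ∀ k ∈ freqBox N, u 0 k = v 0 k) {t : ℝ}
    (ht : |t| < T) :
    hnorm 0 (lowpass N (u t - v t)) ^ 2 ≤ gronwallBound 0
      (C * Mconst (s - μ - 1) * (2 * B) + 1) (truncationError C s (2 * B) N) T := by
  set M := C * Mconst (s - μ - 1) * (2 * B) + 1
  have hμs : μ ≤ s := by linarith
  have hderiv (τ : ℝ) (hτ : |τ| < T) := hasDerivAt_hnorm_sq (s := 0) (t := τ)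
    (w := fun σ => lowpass N (u σ - v σ)) (w' := waveForm S (u τ + v τ) (u τ - v τ))
    (fun _ _ hk => lowpass_of_notMem hk) fun k hk => by
      rw [← hS.waveForm_self_sub_self hμ (Hs_antitone hμs (hu.mem τ hτ).mem_Hs)
        (Hs_antitone hμs (hv.mem τ hτ).mem_Hs)]
      simp only [lowpass_of_mem hk]
      exact (hu.hasDerivAt τ hτ k hk).sub (hv.hasDerivAt τ hτ k hk)
  have hbound (τ : ℝ) (hτ : |τ| < T) : 2 * ‖∑ k ∈ freqBox N,
      starRingEnd ℂ (lowpass N (u τ - v τ) k) * waveForm S (u τ + v τ) (u τ - v τ) k‖ ≤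
      M * hnorm 0 (lowpass N (u τ - v τ)) ^ 2 + truncationError C s (2 * B) N :=
    hS.norm_sum_conj_lowpass_mul_waveForm_le hμ hs hN
      (add_mem (hu.mem τ hτ).mem_Hs (hv.mem τ hτ).mem_Hs)
      (sub_mem (hu.mem τ hτ).mem_Hs (hv.mem τ hτ).mem_Hs)
      (fun k => by simp [(hu.mem τ hτ).2.1 k, (hv.mem τ hτ).2.1 k])
      (hu.hnorm_add_le hv hτ) (hu.hnorm_sub_le hv hτ)
  have hinit : lowpass N (u 0 - v 0) = 0 := by
    funext k
    by_cases hk : k ∈ freqBox N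
    · simp [lowpass_of_mem hk, h0 k hk]
    · exact lowpass_of_notMem hk
  have hgronwall := norm_le_gronwallBound_abs hderiv (by simp [hinit, hnorm_sq])
    (K := M) (ε := truncationError C s (2 * B) N) (fun τ hτ => by
      rw [norm_mul, Real.norm_two, norm_pow, Real.norm_of_nonneg (hnorm_nonneg _ _)]
      refine (mul_le_mul_of_nonneg_left (Complex.abs_re_le_norm _) zero_le_two).trans ?_
      simpa using hbound τ hτ) ht
  have hB : 0 ≤ B := (hnorm_nonneg _ _).trans (hu.norm_le t ht)
  have hM : 0 ≤ M := add_nonneg (mul_nonneg (mul_nonneg hS.const_nonneg (Mconst_nonneg _))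
    (by linarith)) zero_le_one
  exact (le_abs_self _).trans <| hgronwall.trans <|
    gronwallBound_mono le_rfl (truncationError_nonneg _ _ _ _) hM ht.le

theorem hnorm_sub_le_stabilityBound (hμ : 0 ≤ μ) {s : ℝ} (hs : μ + 3 / 2 < s) {B T : ℝ} {N : ℕ}
    (hN : 0 < N) {u v : ℝ → ℤ → ℂ} (hu : SolvesModes S s (freqBox N) B T u)
    (hv : SolvesModes S s (freqBox N) B T v) (h0 : ∀ k ∈ freqBox N, u 0 k = v 0 k) {t : ℝ}
    (ht : |t| < T) : hnorm 0 (u t - v t) ≤ stabilityBound μ C s B T N := by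
  have hdiff := sub_mem (hu.mem t ht).mem_Hs (hv.mem t ht).mem_Hs
  have hlow : lowpass N (u t - v t) ∈ Hs 0 := lowpass_mem_Hs N hdiff.1
  have hhigh : hnorm 0 (u t - v t - lowpass N (u t - v t)) ≤ N ^ (-s) * (2 * B) := by
    have := hnorm_sub_lowpass_le hN (by linarith : 0 ≤ s) hdiff
    rw [zero_sub] at this
    exact this.trans
      (mul_le_mul_of_nonneg_left (hu.hnorm_sub_le hv ht) (Real.rpow_nonneg N.cast_nonneg _))
  calc hnorm 0 (u t - v t)
      = hnorm 0 (lowpass N (u t - v t) + (u t - v t - lowpass N (u t - v t))) := by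
        rw [add_sub_cancel]
    _ ≤ hnorm 0 (lowpass N (u t - v t)) + hnorm 0 (u t - v t - lowpass N (u t - v t)) :=
        hnorm_add_le hlow (sub_mem (Hs_antitone (by linarith) hdiff) hlow)
    _ ≤ stabilityBound μ C s B T N :=
        add_le_add (Real.le_sqrt_of_sq_le (hS.hnorm_lowpass_sub_sq_le hμ hs hN hu hv h0 ht)) hhigh

theorem solution_unique (hμ : 0 ≤ μ) {s : ℝ} (hs : μ + 3 / 2 < s) {B B' T T' : ℝ}
    {u v : ℝ → ℤ → ℂ} (hu : SolvesModes S s Set.univ B T u)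
    (hv : SolvesModes S s Set.univ B' T' v) (h0 : u 0 = v 0) {t : ℝ} (ht : |t| < T)
    (ht' : |t| < T') : u t = v t := by
  have hdiff : u t - v t ∈ Hs 0 := Hs_antitone (by linarith : 0 ≤ s)
    (sub_mem (hu.mem t ht).mem_Hs (hv.mem t ht').mem_Hs)
  have hle : ∀ᶠ N : ℕ in atTop,
      hnorm 0 (u t - v t) ≤ stabilityBound μ C s (max B B') (min T T') N := by
    filter_upwards [eventually_gt_atTop 0] with N hN
    exact hS.hnorm_sub_le_stabilityBound hμ hs hN
      (hu.mono (Set.subset_univ _) (le_max_left _ _) (min_le_left _ _))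
      (hv.mono (Set.subset_univ _) (le_max_right _ _) (min_le_right _ _))
      (fun k _ => congrFun h0 k) (lt_min ht ht')
  have hzero := ge_of_tendsto (tendsto_stabilityBound μ C (max B B') (min T T') (by linarith)) hle
  exact sub_eq_zero.1 (eq_zero_of_hnorm_eq_zero le_rfl hdiff (hzero.antisymm (hnorm_nonneg _ _)))

end IsHamiltonianKernel

/-! ### Galerkin approximations -/

/-- The Fourier coefficient at `k` of the real-valued zero-mean function whose coefficients at the
frequencies `1, …, N` are prescribed and whose coefficients above `N` vanish. -/
noncomputable def realExt (N : ℕ) (k : ℤ) : (Finset.Icc (1 : ℤ) N → ℂ) →L[ℝ] ℂ :=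
  if h : k ∈ Finset.Icc (1 : ℤ) N then ContinuousLinearMap.proj ⟨k, h⟩
  else if h : -k ∈ Finset.Icc (1 : ℤ) N then
    (Complex.conjCLE : ℂ →L[ℝ] ℂ) ∘L ContinuousLinearMap.proj ⟨-k, h⟩
  else 0

lemma realExt_of_mem {N : ℕ} (k : Finset.Icc (1 : ℤ) N) (x : Finset.Icc (1 : ℤ) N → ℂ) :
    realExt N k x = x k := by
  simp [realExt, k.2]

lemma realExt_of_notMem {N : ℕ} {k : ℤ} (hk : k ∉ freqBox N) : realExt N k = 0 := by
  rw [mem_freqBox, abs_le] at hk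
  simp only [realExt, Finset.mem_Icc]
  split_ifs <;> first | rfl | omega

lemma realExt_zero_freq (N : ℕ) : realExt N 0 = 0 := by
  simp [realExt]

lemma realExt_neg_freq (N : ℕ) (k : ℤ) (x : Finset.Icc (1 : ℤ) N → ℂ) :
    realExt N (-k) x = starRingEnd ℂ (realExt N k x) := by
  simp only [realExt, Finset.mem_Icc]
  split_ifs with hneg hpos hpos <;> first | omega | simp

lemma realExt_restrict {N : ℕ} {w : ℤ → ℂ} (h0 : w 0 = 0)
    (hconj : ∀ k, w (-k) = starRingEnd ℂ (w k)) {k : ℤ} (hk : k ∈ freqBox N) :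
    realExt N k (fun j => w j) = w k := by
  rw [mem_freqBox, abs_le] at hk
  simp only [realExt, Finset.mem_Icc]
  split_ifs
  · rfl
  · simp [hconj]
  · rw [show k = 0 by omega, h0]
    rfl

lemma hnorm_lowpass_le {s : ℝ} {f : ℤ → ℂ} (hf : f ∈ Hs s) (N : ℕ) :
    hnorm s (lowpass N f) ≤ hnorm s f := by
  refine hnorm_le_of_sum_le (hnorm_nonneg s f) fun F => ?_
  refine (Finset.sum_le_sum fun k _ => ?_).trans (sum_le_hnorm_sq hf F)
  by_cases hk : k ∈ freqBox N
  · rw [lowpass_of_mem hk]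
  · rw [lowpass_of_notMem hk, norm_zero, zero_pow two_ne_zero, mul_zero]
    positivity

lemma contDiff_waveForm_realExt (S : ℤ → ℤ → ℤ → ℂ) (N : ℕ) (k : ℤ) :
    ContDiff ℝ 1 fun x => waveForm S (fun j => realExt N j x) (fun j => realExt N j x) k := by
  simp only [waveForm, aHat_eq_sum fun j (hj : j ∉ freqBox N) =>
    DFunLike.congr_fun (realExt_of_notMem hj) _]
  exact (contDiff_const.mul (ContDiff.sum fun n _ => (contDiff_const.mul
    (realExt N (k - n)).contDiff).mul (realExt N n).contDiff)).neg

namespace IsHamiltonianKernel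

variable {μ C s : ℝ} {S : ℤ → ℤ → ℤ → ℂ} (hS : IsHamiltonianKernel μ C S)
include hS

lemma exists_galerkin_cutoff {f : ℤ → ℂ} (hf : InHs s f) (N : ℕ) {R T : ℝ} (hR : 0 < R)
    (hT : 0 < T) :
    ∃ (u : ℝ → ℤ → ℂ) (χ : ℝ → ℝ), u 0 = lowpass N f ∧ (∀ t, ∀ k ∉ freqBox N, u t k = 0) ∧
      (∀ t, InHs s (u t)) ∧ (∀ t, 0 ≤ χ t) ∧ (∀ t, χ t ≤ 1) ∧
      (∀ t, (∀ k, ‖u t k‖ ≤ R) → χ t = 1) ∧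
      ∀ t, |t| < T → ∀ k ∈ freqBox N,
        HasDerivAt (fun τ => u τ k) (χ t * waveForm S (u t) (u t) k) t := by
  obtain ⟨α, χ, hα0, hχ0, hχ1, hχ, hα⟩ := exists_hasDerivAt_smul_cutoff
    (contDiff_pi.2 fun k : Finset.Icc (1 : ℤ) N => contDiff_waveForm_realExt S N k)
    (fun k => f k) hR hT
  set u : ℝ → ℤ → ℂ := fun t k => realExt N k (α t)
  have hsupp (t : ℝ) (k : ℤ) (hk : k ∉ freqBox N) : u t k = 0 := by
    simp [u, realExt_of_notMem hk]
  have hzero (t : ℝ) : u t 0 = 0 := by simp [u, realExt_zero_freq]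
  have hconj (t : ℝ) (k : ℤ) : u t (-k) = starRingEnd ℂ (u t k) := realExt_neg_freq N k _
  have hlow (t : ℝ) : lowpass N (u t) = u t := by
    funext k
    by_cases hk : k ∈ freqBox N
    · exact lowpass_of_mem hk
    · rw [lowpass_of_notMem hk, hsupp t k hk]
  have hmem (t : ℝ) {ν : ℝ} : u t ∈ Hs ν := hlow t ▸ lowpass_mem_Hs N (hzero t)
  refine ⟨u, χ, ?_, hsupp, fun t => ⟨hzero t, hconj t, (hmem t).2⟩, hχ0, hχ1, fun t ht => ?_,
    fun t ht k hk => ?_⟩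
  · funext k
    by_cases hk : k ∈ freqBox N
    · simp only [u, hα0, realExt_restrict hf.1 hf.2.1 hk, lowpass_of_mem hk]
    · rw [hsupp 0 k hk, lowpass_of_notMem hk]
  · refine hχ t ((pi_norm_le_iff_of_nonneg hR.le).2 fun k => ?_)
    rw [← realExt_of_mem k (α t)]
    exact ht k
  · refine ((realExt N k).hasFDerivAt.comp_hasDerivAt t (hα t ht)).congr_deriv ?_
    rw [map_smul, Complex.real_smul, realExt_restrict (waveForm_zero_freq S _ _) _ hk]
    intro j
    exact hS.waveForm_neg_freq (hconj t) (hconj t) j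

end IsHamiltonianKernel

/-- The constant `K_s` in the energy inequality `|d/dt ‖u‖²| ≤ 2 K_s ‖u‖³` in `Ḣ^s`; the existence
time is `1 / (K_s ‖f‖)`. -/
noncomputable def energyConst (μ C Cs s : ℝ) : ℝ := C * Cs * Mconst (s - μ - 1)

namespace IsHamiltonianKernel

variable {μ C s Cs : ℝ} {S : ℤ → ℤ → ℤ → ℂ} (hS : IsHamiltonianKernel μ C S)
include hS

lemma energyConst_nonneg (hCs : SymbolBound s Cs) : 0 ≤ energyConst μ C Cs s :=
  mul_nonneg (mul_nonneg hS.const_nonneg hCs.const_nonneg) (Mconst_nonneg _)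

lemma hnorm_le_riccatiBound_of_cutoff (hμ : 0 ≤ μ) (hs : μ + 3 / 2 < s) (hCs : SymbolBound s Cs)
    {N : ℕ} {T X : ℝ} {u : ℝ → ℤ → ℂ} {χ : ℝ → ℝ} (hsupp : ∀ t, ∀ k ∉ freqBox N, u t k = 0)
    (hmem : ∀ t, InHs s (u t)) (hχ0 : ∀ t, 0 ≤ χ t) (hχ1 : ∀ t, χ t ≤ 1)
    (hderiv : ∀ t, |t| < T → ∀ k ∈ freqBox N,
      HasDerivAt (fun τ => u τ k) (χ t * waveForm S (u t) (u t) k) t)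
    (h0 : hnorm s (u 0) ≤ X) {t : ℝ} (ht : |t| < T) (hX : energyConst μ C Cs s * X * |t| < 1) :
    hnorm s (u t) ≤ riccatiBound (energyConst μ C Cs s) X |t| := by
  refine le_riccatiBound_abs (hS.energyConst_nonneg hCs) ((hnorm_nonneg _ _).trans h0)
    (fun _ => hnorm_nonneg _ _) (fun τ hτ => hasDerivAt_hnorm_sq hsupp (hderiv τ hτ))
    (fun τ _ => ?_) h0 ht hX
  set E := ∑ k ∈ freqBox N, ((|(k : ℝ)| ^ (2 * s) : ℝ) : ℂ) *
    (starRingEnd ℂ (u τ k) * waveForm S (u τ) (u τ) k) with hE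
  have hfactor : ∑ k ∈ freqBox N, ((|(k : ℝ)| ^ (2 * s) : ℝ) : ℂ) *
      (starRingEnd ℂ (u τ k) * (χ τ * waveForm S (u τ) (u τ) k)) = χ τ * E := by
    rw [hE, Finset.mul_sum]
    exact Finset.sum_congr rfl fun k _ => by ring
  calc |2 * (∑ k ∈ freqBox N, ((|(k : ℝ)| ^ (2 * s) : ℝ) : ℂ) *
        (starRingEnd ℂ (u τ k) * (χ τ * waveForm S (u τ) (u τ) k))).re|
      = 2 * (χ τ * |E.re|) := by
        rw [hfactor, Complex.re_ofReal_mul, abs_mul, abs_mul, abs_two, abs_of_nonneg (hχ0 τ)]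
    _ ≤ 2 * ‖E‖ := mul_le_mul_of_nonneg_left
        ((mul_le_of_le_one_left (abs_nonneg _) (hχ1 τ)).trans (Complex.abs_re_le_norm E))
        zero_le_two
    _ ≤ 2 * energyConst μ C Cs s * hnorm s (u τ) ^ 3 := by
        rw [mul_assoc]
        exact mul_le_mul_of_nonneg_left (hS.norm_sum_rpow_mul_conj_mul_waveForm_self_le hμ hs hCs
          (hmem τ).mem_Hs (hmem τ).2.1 (hsupp τ)) zero_le_two

theorem exists_galerkin (hμ : 0 ≤ μ) (hs : μ + 3 / 2 < s) (hCs : SymbolBound s Cs) {f : ℤ → ℂ}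
    (hf : InHs s f) (N : ℕ) {T : ℝ} (hT : 0 < T)
    (hfT : energyConst μ C Cs s * hnorm s f * T < 1) :
    ∃ u : ℝ → ℤ → ℂ,
      SolvesModes S s (freqBox N) (riccatiBound (energyConst μ C Cs s) (hnorm s f) T) T u ∧
      (∀ k ∈ freqBox N, u 0 k = f k) ∧
      ∀ t, |t| < T → hnorm s (u t) ≤ riccatiBound (energyConst μ C Cs s) (hnorm s f) |t| := by
  set K := energyConst μ C Cs s
  have hK : 0 ≤ K := hS.energyConst_nonneg hCs
  have hX := hnorm_nonneg s f
  have hB := riccatiBound_nonneg hX hfT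
  obtain ⟨u, χ, h0, hsupp, hmem, hχ0, hχ1, hχ, hderiv⟩ :=
    hS.exists_galerkin_cutoff hf N (add_pos_of_nonneg_of_pos hB one_pos) hT
  have hbound (t : ℝ) (ht : |t| < T) : hnorm s (u t) ≤ riccatiBound K (hnorm s f) |t| :=
    hS.hnorm_le_riccatiBound_of_cutoff hμ hs hCs hsupp hmem hχ0 hχ1 hderiv
      (h0 ▸ hnorm_lowpass_le hf.mem_Hs N) ht <|
      (mul_le_mul_of_nonneg_left ht.le (mul_nonneg hK hX)).trans_lt hfT
  have hbound' (t : ℝ) (ht : |t| < T) : hnorm s (u t) ≤ riccatiBound K (hnorm s f) T :=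
    (hbound t ht).trans (riccatiBound_mono hK hX ht.le hfT)
  refine ⟨u, ⟨fun t _ => hmem t, hbound', fun t ht k hk => ?_⟩, fun k hk => ?_, hbound⟩
  · have hχt : χ t = 1 := hχ t fun j =>
      (norm_le_hnorm (by linarith) (hmem t).mem_Hs j).trans ((hbound' t ht).trans (by linarith))
    simpa [hχt] using hderiv t ht k hk
  · rw [h0, lowpass_of_mem hk]

end IsHamiltonianKernel

/-! ### Passage to the limit -/

lemma freqBox_subset_freqBox {N N' : ℕ} (h : N ≤ N') : freqBox N ⊆ freqBox N' := fun k hk => by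
  rw [mem_freqBox] at hk ⊢
  omega

lemma eventually_mem_freqBox (k : ℤ) : ∀ᶠ N in atTop, k ∈ freqBox N := by
  filter_upwards [eventually_ge_atTop k.natAbs] with N hN
  rw [mem_freqBox, Int.abs_eq_natAbs]
  exact_mod_cast hN

lemma inHs_of_tendsto {ι : Type*} {l : Filter ι} [l.NeBot] {s b : ℝ} {w : ι → ℤ → ℂ} {u : ℤ → ℂ}
    (hlim : ∀ k, Tendsto (fun i => w i k) l (nhds (u k))) (hw : ∀ i, InHs s (w i))
    (hb : ∀ i, hnorm s (w i) ≤ b) : InHs s u := by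
  have hu : u ∈ Hs s := mem_Hs_of_tendsto hlim (.of_forall fun i => ⟨(hw i).mem_Hs, hb i⟩)
  refine ⟨hu.1, fun k => tendsto_nhds_unique (hlim (-k)) ?_, hu.2⟩
  simpa only [(hw _).2.1 k, Function.comp_def] using
    (Complex.continuous_conj.tendsto _).comp (hlim k)

namespace IsHamiltonianKernel

variable {μ C s Cs B T : ℝ} {S : ℤ → ℤ → ℤ → ℂ} (hS : IsHamiltonianKernel μ C S)
include hS

section Limit

variable {f : ℤ → ℂ} {U : ℕ → ℝ → ℤ → ℂ} {u : ℝ → ℤ → ℂ}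

lemma hnorm_sub_le_stabilityBound_of_le (hμ : 0 ≤ μ) (hs : μ + 3 / 2 < s)
    (hU : ∀ N, SolvesModes S s (freqBox N) B T (U N)) (hU0 : ∀ N, ∀ k ∈ freqBox N, U N 0 k = f k)
    {N N' : ℕ} (hN : 0 < N) (hNN' : N ≤ N') {t : ℝ} (ht : |t| < T) :
    hnorm 0 (U N t - U N' t) ≤ stabilityBound μ C s B T N := by
  have hbox := freqBox_subset_freqBox hNN'
  exact hS.hnorm_sub_le_stabilityBound hμ hs hN (hU N) ((hU N').mono hbox le_rfl le_rfl)
    (fun k hk => (hU0 N k hk).trans (hU0 N' k (hbox hk)).symm) ht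

lemma exists_tendsto_galerkin (hμ : 0 ≤ μ) (hs : μ + 3 / 2 < s)
    (hU : ∀ N, SolvesModes S s (freqBox N) B T (U N))
    (hU0 : ∀ N, ∀ k ∈ freqBox N, U N 0 k = f k) :
    ∃ u : ℝ → ℤ → ℂ, ∀ t, |t| < T → ∀ k, Tendsto (fun N => U N t k) atTop (nhds (u t k)) := by
  have hlim (t : ℝ) (ht : |t| < T) (k : ℤ) : ∃ z, Tendsto (fun N => U N t k) atTop (nhds z) := by
    refine cauchySeq_tendsto_of_complete (Metric.cauchySeq_iff'.2 fun ε hε => ?_)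
    obtain ⟨N, hN, hNε⟩ := ((eventually_gt_atTop 0).and
      ((tendsto_stabilityBound μ C B T (by linarith : 3 / 2 < s)).eventually_lt_const hε)).exists
    refine ⟨N, fun N' hN' => ?_⟩
    rw [dist_comm, dist_eq_norm]
    exact (norm_le_hnorm le_rfl (Hs_antitone (by linarith : 0 ≤ s)
      (sub_mem ((hU N).mem t ht).mem_Hs ((hU N').mem t ht).mem_Hs)) k).trans_lt
      ((hS.hnorm_sub_le_stabilityBound_of_le hμ hs hU hU0 hN hN' ht).trans_lt hNε)
  choose! u hu using hlim
  exact ⟨u, hu⟩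

lemma norm_waveForm_galerkin_sub_le (hμ : 0 ≤ μ) (hs : μ + 3 / 2 < s)
    (hU : ∀ N, SolvesModes S s (freqBox N) B T (U N)) (hU0 : ∀ N, ∀ k ∈ freqBox N, U N 0 k = f k)
    {t : ℝ} (ht : |t| < T) (hlim : ∀ k, Tendsto (fun N => U N t k) atTop (nhds (u t k)))
    {N : ℕ} (hN : 0 < N) (k : ℤ) :
    ‖waveForm S (U N t) (U N t) k - waveForm S (u t) (u t) k‖ ≤
      |(k : ℝ)| * (C * (2 * B) * stabilityBound μ C s B T N) := by
  have hμs : μ ≤ s := by linarith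
  have hs0 : 0 ≤ s := hμ.trans hμs
  have hUmem (N : ℕ) : U N t ∈ Hs s := ((hU N).mem t ht).mem_Hs
  have hUbd (N : ℕ) : hnorm s (U N t) ≤ B := (hU N).norm_le t ht
  have hu : u t ∈ Hs s := mem_Hs_of_tendsto hlim (.of_forall fun N => ⟨hUmem N, hUbd N⟩)
  have hubd := hnorm_le_of_tendsto hlim (.of_forall fun N => ⟨hUmem N, hUbd N⟩)
  have hsum : hnorm μ (U N t + u t) ≤ 2 * B := by
    linarith [hnorm_mono hμs (add_mem (hUmem N) hu), hnorm_add_le (hUmem N) hu, hUbd N]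
  have hdiff : hnorm 0 (U N t - u t) ≤ stabilityBound μ C s B T N := by
    refine hnorm_le_of_tendsto (w := fun N' => U N t - U N' t) (l := atTop)
      (fun k => (hlim k).const_sub (U N t k)) ?_
    filter_upwards [eventually_ge_atTop N] with N' hN'
    exact ⟨Hs_antitone hs0 (sub_mem (hUmem N) (hUmem N')),
      hS.hnorm_sub_le_stabilityBound_of_le hμ hs hU hU0 hN hN' ht⟩
  rw [← Pi.sub_apply, hS.waveForm_self_sub_self hμ (Hs_antitone hμs (hUmem N)) (Hs_antitone hμs hu)]
  refine (hS.norm_waveForm_le (Hs_antitone hμs (add_mem (hUmem N) hu))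
    (Hs_antitone hs0 (sub_mem (hUmem N) hu)) k).trans ?_
  have := hS.const_nonneg
  have := hnorm_nonneg 0 (U N t - u t)
  have := (hnorm_nonneg μ (U N t + u t)).trans hsum
  gcongr

lemma solvesModes_of_tendsto_galerkin (hμ : 0 ≤ μ) (hs : μ + 3 / 2 < s)
    (hU : ∀ N, SolvesModes S s (freqBox N) B T (U N)) (hU0 : ∀ N, ∀ k ∈ freqBox N, U N 0 k = f k)
    (hlim : ∀ t, |t| < T → ∀ k, Tendsto (fun N => U N t k) atTop (nhds (u t k))) :
    SolvesModes S s Set.univ B T u where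
  mem t ht := inHs_of_tendsto (hlim t ht) (fun N => (hU N).mem t ht) fun N => (hU N).norm_le t ht
  norm_le t ht := hnorm_le_of_tendsto (hlim t ht)
    (.of_forall fun N => ⟨((hU N).mem t ht).mem_Hs, (hU N).norm_le t ht⟩)
  hasDerivAt t ht k _ := by
    have hrate : Tendsto (fun N => |(k : ℝ)| * (C * (2 * B) * stabilityBound μ C s B T N)) atTop
        (nhds 0) := by
      simpa using ((tendsto_stabilityBound μ C B T (by linarith)).const_mul (C * (2 * B))).const_mul
        |(k : ℝ)|
    have hunif : TendstoUniformlyOn (fun N τ => waveForm S (U N τ) (U N τ) k)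
        (fun τ => waveForm S (u τ) (u τ) k) atTop {τ | |τ| < T} := by
      refine Metric.tendstoUniformlyOn_iff.2 fun ε hε => ?_
      filter_upwards [eventually_gt_atTop 0, hrate.eventually_lt_const hε] with N hN hNε τ hτ
      rw [dist_comm, dist_eq_norm]
      exact (hS.norm_waveForm_galerkin_sub_le hμ hs hU hU0 hτ (hlim τ hτ) hN k).trans_lt hNε
    refine hasDerivAt_of_tendstoUniformlyOn (isOpen_lt continuous_abs continuous_const) hunif ?_
      (fun τ hτ => hlim τ hτ k) ht
    filter_upwards [eventually_mem_freqBox k] with N hN τ hτ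
    exact (hU N).hasDerivAt τ hτ k hN

end Limit

theorem exists_local_solution (hμ : 0 ≤ μ) (hs : μ + 3 / 2 < s) (hCs : SymbolBound s Cs)
    {f : ℤ → ℂ} (hf : InHs s f) (hT : 0 < T) (hfT : energyConst μ C Cs s * hnorm s f * T < 1) :
    ∃ u : ℝ → ℤ → ℂ,
      SolvesModes S s Set.univ (riccatiBound (energyConst μ C Cs s) (hnorm s f) T) T u ∧ u 0 = f ∧
      ∀ t, |t| < T → hnorm s (u t) ≤ riccatiBound (energyConst μ C Cs s) (hnorm s f) |t| := by
  choose U hU hU0 hbound using fun N => hS.exists_galerkin hμ hs hCs hf N hT hfT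
  obtain ⟨u, hlim⟩ := hS.exists_tendsto_galerkin hμ hs hU hU0
  refine ⟨u, hS.solvesModes_of_tendsto_galerkin hμ hs hU hU0 hlim, ?_, fun t ht =>
    hnorm_le_of_tendsto (hlim t ht)
      (.of_forall fun N => ⟨((hU N).mem t ht).mem_Hs, hbound N t ht⟩)⟩
  funext k
  refine tendsto_nhds_unique (hlim 0 (by rwa [abs_zero]) k) (tendsto_const_nhds.congr' ?_)
  filter_upwards [eventually_mem_freqBox k] with N hN
  exact (hU0 N k hN).symm

end IsHamiltonianKernel

/-! ### Strong continuity and maximal solutions -/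

lemma abs_hnorm_sub_hnorm_le {s : ℝ} {u v : ℤ → ℂ} (hu : u ∈ Hs s) (hv : v ∈ Hs s) :
    |hnorm s u - hnorm s v| ≤ hnorm s (u - v) := by
  have huv := hnorm_add_le (sub_mem hu hv) hv
  have hvu := hnorm_add_le (sub_mem hv hu) hu
  rw [sub_add_cancel] at huv hvu
  rw [← neg_sub, hnorm_neg] at hvu
  exact abs_sub_le_iff.2 ⟨by linarith, by linarith⟩

lemma HsContOn.continuousOn_hnorm {s : ℝ} {u : ℝ → ℤ → ℂ} {I : Set ℝ} (hu : HsContOn s u I)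
    (hmem : ∀ t ∈ I, u t ∈ Hs s) : ContinuousOn (fun t => hnorm s (u t)) I := fun t₀ ht₀ => by
  refine tendsto_iff_dist_tendsto_zero.2 <|
    squeeze_zero' (.of_forall fun _ => dist_nonneg) ?_ (hu t₀ ht₀)
  filter_upwards [self_mem_nhdsWithin] with t ht
  exact abs_hnorm_sub_hnorm_le (hmem t ht) (hmem t₀ ht₀)

lemma IsSolution.exists_solvesModes {S : ℤ → ℤ → ℤ → ℂ} {s τ T : ℝ} {u : ℝ → ℤ → ℂ}
    (hu : IsSolution S s (Set.Ioo (-τ) τ) u) (hT : T < τ) :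
    ∃ B, SolvesModes S s Set.univ B T u := by
  obtain ⟨hmem, hcont, hderiv, -, -⟩ := hu
  have hIcc : Set.Icc (-T) T ⊆ Set.Ioo (-τ) τ := Set.Icc_subset_Ioo (neg_lt_neg hT) hT
  obtain ⟨B, hB⟩ := isCompact_Icc.exists_bound_of_continuousOn
    ((hcont.continuousOn_hnorm fun t ht => (hmem t ht).mem_Hs).mono hIcc)
  have hdom {t : ℝ} (ht : |t| < T) : t ∈ Set.Icc (-T) T := abs_le.1 ht.le
  exact ⟨B, fun t ht => hmem t (hIcc (hdom ht)),
    fun t ht => (le_abs_self _).trans (hB t (hdom ht)),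
    fun t ht k _ => hderiv t (hIcc (hdom ht)) k⟩

namespace IsHamiltonianKernel

variable {μ C s Cs B T τ : ℝ} {S : ℤ → ℤ → ℤ → ℂ} {u v : ℝ → ℤ → ℂ}
  (hS : IsHamiltonianKernel μ C S)
include hS

-- The growth bound restarts at every time: by uniqueness `u` is the solution issued from `u t₀`.
lemma exists_hnorm_le_riccatiBound (hμ : 0 ≤ μ) (hs : μ + 3 / 2 < s) (hCs : SymbolBound s Cs)
    (hu : SolvesModes S s Set.univ B T u) {t₀ : ℝ} (ht₀ : |t₀| < T) :
    ∃ δ > 0, |t₀| + δ ≤ T ∧ ∀ t, |t - t₀| < δ →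
      hnorm s (u t) ≤ riccatiBound (energyConst μ C Cs s) (hnorm s (u t₀)) |t - t₀| := by
  have hKX := mul_nonneg (hS.energyConst_nonneg hCs) (hnorm_nonneg s (u t₀))
  obtain ⟨ε, hε, hKXε⟩ := exists_pos_mul_lt one_pos (energyConst μ C Cs s * hnorm s (u t₀))
  have hδ : 0 < min ε (T - |t₀|) := lt_min hε (sub_pos.2 ht₀)
  have hδT : |t₀| + min ε (T - |t₀|) ≤ T := by linarith [min_le_right ε (T - |t₀|)]
  obtain ⟨w, hw, hw0, hwbound⟩ := hS.exists_local_solution hμ hs hCs (hu.mem t₀ ht₀) hδ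
    ((mul_le_mul_of_nonneg_left (min_le_left _ _) hKX).trans_lt hKXε)
  refine ⟨_, hδ, hδT, fun t ht => ?_⟩
  have hunique := hS.solution_unique hμ hs (hu.shift hδT) hw (by rw [add_zero, hw0]) ht ht
  rw [add_sub_cancel] at hunique
  exact hunique ▸ hwbound _ ht

lemma tendsto_hnorm_solution_sub (hμ : 0 ≤ μ) (hs : μ + 3 / 2 < s) (hCs : SymbolBound s Cs)
    (hu : SolvesModes S s Set.univ B T u) {t₀ : ℝ} (ht₀ : |t₀| < T) :
    Tendsto (fun t => hnorm s (u t - u t₀)) (nhds t₀) (nhds 0) := by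
  obtain ⟨δ, hδ, hδT, hbound⟩ := hS.exists_hnorm_le_riccatiBound hμ hs hCs hu ht₀
  refine tendsto_hnorm_sub_zero (hu.mem t₀ ht₀).mem_Hs
    (fun k => (hu.hasDerivAt t₀ ht₀ k trivial).continuousAt.tendsto)
    (b := fun t => riccatiBound (energyConst μ C Cs s) (hnorm s (u t₀)) |t - t₀|) ?_ ?_
  · filter_upwards [Metric.ball_mem_nhds t₀ hδ] with t ht
    rw [Metric.mem_ball, Real.dist_eq] at ht
    refine ⟨(hu.mem t ?_).mem_Hs, hbound t ht⟩
    linarith [abs_sub_abs_le_abs_sub t t₀]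
  · have hcont : ContinuousAt
        (fun t => riccatiBound (energyConst μ C Cs s) (hnorm s (u t₀)) |t - t₀|) t₀ :=
      ContinuousAt.div continuousAt_const (by fun_prop) (by simp)
    simpa [riccatiBound] using hcont.tendsto

lemma inHs_waveForm (hμ : 0 ≤ μ) (hs : μ + 1 / 2 < s) {z : ℤ → ℂ} (hz : InHs s z) :
    InHs (s - 1) (waveForm S z z) :=
  ⟨waveForm_zero_freq S z z, hS.waveForm_neg_freq hz.2.1 hz.2.1,
    (hS.waveForm_mem_Hs hμ hs hz.mem_Hs hz.mem_Hs).2⟩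

lemma tendsto_hnorm_waveForm_sub (hμ : 0 ≤ μ) (hs : μ + 1 / 2 < s) {ι : Type*} {l : Filter ι}
    {w : ι → ℤ → ℂ} {z : ℤ → ℂ} (hz : z ∈ Hs s) (hw : ∀ᶠ i in l, w i ∈ Hs s)
    (hlim : Tendsto (fun i => hnorm s (w i - z)) l (nhds 0)) :
    Tendsto (fun i => hnorm (s - 1) (waveForm S (w i) (w i) - waveForm S z z)) l (nhds 0) := by
  set A := 2 * (C * 2 ^ s) * Mconst (s - μ)
  have hbound : Tendsto (fun i => A * (hnorm s (w i - z) + hnorm s (z + z)) * hnorm s (w i - z)) l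
      (nhds 0) := by
    simpa using ((hlim.add_const (hnorm s (z + z))).const_mul A).mul hlim
  refine squeeze_zero' (.of_forall fun _ => hnorm_nonneg _ _) ?_ hbound
  filter_upwards [hw] with i hi
  have hA : 0 ≤ A := by
    have := hS.const_nonneg
    have := Mconst_nonneg (s - μ)
    positivity
  have hsum : hnorm s (w i + z) ≤ hnorm s (w i - z) + hnorm s (z + z) := by
    simpa [sub_add_add_cancel] using hnorm_add_le (sub_mem hi hz) (add_mem hz hz)
  rw [hS.waveForm_self_sub_self hμ (Hs_antitone (by linarith) hi) (Hs_antitone (by linarith) hz)]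
  refine (hS.hnorm_waveForm_le hμ hs (add_mem hi hz) (sub_mem hi hz)).trans ?_
  have := hnorm_nonneg s (w i - z)
  gcongr

lemma isSolution_of_solvesModes (hμ : 0 ≤ μ) (hs : μ + 3 / 2 < s) (hCs : SymbolBound s Cs)
    (hu : ∀ T < τ, ∃ B, SolvesModes S s Set.univ B T u) :
    IsSolution S s (Set.Ioo (-τ) τ) u := by
  have hnear {t : ℝ} (ht : t ∈ Set.Ioo (-τ) τ) : ∃ B T, |t| < T ∧ SolvesModes S s Set.univ B T u :=
    have ⟨T, htT, hTτ⟩ := exists_between (abs_lt.2 ht)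
    have ⟨B, hB⟩ := hu T hTτ
    ⟨B, T, htT, hB⟩
  have hmem {t : ℝ} (ht : t ∈ Set.Ioo (-τ) τ) : InHs s (u t) :=
    have ⟨_, _, htT, h⟩ := hnear ht
    h.mem t htT
  have hcont {t : ℝ} (ht : t ∈ Set.Ioo (-τ) τ) :
      Tendsto (fun x => hnorm s (u x - u t)) (nhdsWithin t (Set.Ioo (-τ) τ)) (nhds 0) :=
    have ⟨_, _, htT, h⟩ := hnear ht
    (hS.tendsto_hnorm_solution_sub hμ hs hCs h htT).mono_left nhdsWithin_le_nhds
  refine ⟨fun t ht => hmem ht, fun t ht => hcont ht, fun t ht k => ?_,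
    fun t ht => hS.inHs_waveForm hμ (by linarith) (hmem ht), fun t ht => ?_⟩
  · obtain ⟨_, _, htT, h⟩ := hnear ht
    exact h.hasDerivAt t htT k trivial
  · exact hS.tendsto_hnorm_waveForm_sub hμ (by linarith) (hmem ht).mem_Hs
      (eventually_mem_nhdsWithin.mono fun x hx => (hmem hx).mem_Hs) (hcont ht)

lemma exists_glued_solution (hμ : 0 ≤ μ) (hs : μ + 3 / 2 < s) {f : ℤ → ℂ} (hτ : 0 < τ)
    (hloc : ∀ T, 0 < T → T < τ → ∃ u : ℝ → ℤ → ℂ, (∃ B, SolvesModes S s Set.univ B T u) ∧ u 0 = f) :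
    ∃ u : ℝ → ℤ → ℂ, (∀ T < τ, ∃ B, SolvesModes S s Set.univ B T u) ∧ u 0 = f := by
  choose! U hU hU0 using hloc
  choose! B hU using hU
  have hconsistent {T T' t : ℝ} (hT : T < τ) (hT' : T' < τ) (ht : |t| < T) (ht' : |t| < T') :
      U T t = U T' t := by
    have hpos := (abs_nonneg t).trans_lt ht
    have hpos' := (abs_nonneg t).trans_lt ht'
    exact hS.solution_unique hμ hs (hU T hpos hT) (hU T' hpos' hT')
      ((hU0 T hpos hT).trans (hU0 T' hpos' hT').symm) ht ht'
  set u : ℝ → ℤ → ℂ := fun t => U ((|t| + τ) / 2) t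
  have hglue {T t : ℝ} (hT : T < τ) (ht : |t| < T) : u t = U T t :=
    hconsistent (by linarith) hT (by linarith) ht
  refine ⟨u, fun T hT => ⟨B T, fun t ht => ?_, fun t ht => ?_, fun t ht k hk => ?_⟩,
    hU0 _ (by simp [hτ]) (by simp [hτ])⟩ <;>
    have hsol := hU T ((abs_nonneg t).trans_lt ht) hT <;> rw [hglue hT ht]
  · exact hsol.mem t ht
  · exact hsol.norm_le t ht
  · refine (hsol.hasDerivAt t ht k hk).congr_of_eventuallyEq ?_
    filter_upwards [(isOpen_lt continuous_abs continuous_const).mem_nhds ht] with x hx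
    rw [hglue hT hx]

lemma exists_solvesModes (hμ : 0 ≤ μ) (hs : μ + 3 / 2 < s) (hCs : SymbolBound s Cs) {f : ℤ → ℂ}
    (hf : InHs s f) (hτ : energyConst μ C Cs s * hnorm s f * τ ≤ 1) :
    ∃ u : ℝ → ℤ → ℂ, (∀ T < τ, ∃ B, SolvesModes S s Set.univ B T u) ∧ u 0 = f := by
  rcases le_or_gt τ 0 with hτ0 | hτ0
  · have hvoid {T t : ℝ} (hT : T < τ) (ht : |t| < T) : False := by linarith [abs_nonneg t]
    exact ⟨fun _ => f, fun T hT => ⟨0, fun t ht => (hvoid hT ht).elim,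
      fun t ht => (hvoid hT ht).elim, fun t ht => (hvoid hT ht).elim⟩, rfl⟩
  · refine hS.exists_glued_solution hμ hs hτ0 fun T hT hTτ => ?_
    have hfT : energyConst μ C Cs s * hnorm s f * T < 1 := by
      rcases (mul_nonneg (hS.energyConst_nonneg hCs) (hnorm_nonneg s f)).eq_or_lt with h | h
      · rw [← h, zero_mul]
        exact one_pos
      · exact (mul_lt_mul_of_pos_left hTτ h).trans_le hτ
    obtain ⟨u, hu, hu0, -⟩ := hS.exists_local_solution hμ hs hCs hf hT hfT
    exact ⟨u, ⟨_, hu⟩, hu0⟩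

end IsHamiltonianKernel

theorem short_time_existence_general {μ C s Cs τ : ℝ} (hμ : 0 ≤ μ) {S : ℤ → ℤ → ℤ → ℂ}
    (hS : IsHamiltonianKernel μ C S) (hs : μ + 3 / 2 < s) (hCs : SymbolBound s Cs) {f : ℤ → ℂ}
    (hf : InHs s f) (hτ : energyConst μ C Cs s * hnorm s f * τ ≤ 1) :
    ∃ u : ℝ → ℤ → ℂ,
      (IsSolution S s (Set.Ioo (-τ) τ) u ∧ u 0 = f) ∧
      ∀ v : ℝ → ℤ → ℂ, IsSolution S s (Set.Ioo (-τ) τ) v → v 0 = f →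
        ∀ t ∈ Set.Ioo (-τ) τ, v t = u t := by
  obtain ⟨u, hu, hu0⟩ := hS.exists_solvesModes hμ hs hCs hf hτ
  refine ⟨u, ⟨hS.isSolution_of_solvesModes hμ hs hCs hu, hu0⟩, fun v hv hv0 t ht => ?_⟩
  obtain ⟨T, htT, hTτ⟩ := exists_between (abs_lt.2 ht)
  obtain ⟨_, huT⟩ := hu T hTτ
  obtain ⟨_, hvT⟩ := hv.exists_solvesModes hTτ
  exact hS.solution_unique hμ hs hvT huT (hv0.trans hu0.symm) htT htT

/-- Short-time existence and uniqueness for scale-invariant Hamiltonian waves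
(kernels of nonnegative degree `μ ≥ 0`). -/
theorem short_time_existence
    (μ : ℝ) (hμ : 0 ≤ μ) (S : ℤ → ℤ → ℤ → ℂ)
    (hS0 : ∀ k m n : ℤ, k * m * n = 0 → S k m n = 0)
    (hSreal : ∀ k m n : ℤ, S k m n = starRingEnd ℂ (S (-k) (-m) (-n)))
    (hSsym : ∀ k m n : ℤ, S k m n = S k n m)
    (hScyc : ∀ k m n : ℤ, S k m n = S m n k)
    (hShom : ∀ η : ℕ, 0 < η → ∀ k m n : ℤ,
      S (η * k) (η * m) (η * n) = ((((η : ℝ) ^ μ : ℝ)) : ℂ) * S k m n)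
    (C : ℝ) (hC : 0 < C)
    (hSbound : ∀ k m n : ℤ, ‖S k m n‖ ≤
      C * min (|(k : ℝ)| ^ μ) (min (|(m : ℝ)| ^ μ) (|(n : ℝ)| ^ μ)))
    (s : ℝ) (hs : μ + 3 / 2 < s)
    (Cs : ℝ)
    (hCs : ∀ k m n : ℝ, k + m + n = 0 →
      |k * |k| ^ (2 * s) + m * |m| ^ (2 * s) + n * |n| ^ (2 * s)| ≤
        Cs * (|k| ^ s * |m| ^ s * |n| + |n| ^ s * |k| ^ s * |m| + |m| ^ s * |n| ^ s * |k|))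
    (Ks : ℝ) (hKs : Ks = C * Cs * Mconst (s - μ - 1))
    (f : ℤ → ℂ) (hf : InHs s f) :
    ∃ u : ℝ → ℤ → ℂ,
      (IsSolution S s (Set.Ioo (-(1 / (Ks * hnorm s f))) (1 / (Ks * hnorm s f))) u ∧
        u 0 = f) ∧
      ∀ v : ℝ → ℤ → ℂ,
        IsSolution S s (Set.Ioo (-(1 / (Ks * hnorm s f))) (1 / (Ks * hnorm s f))) v →
        v 0 = f →
        ∀ t ∈ Set.Ioo (-(1 / (Ks * hnorm s f))) (1 / (Ks * hnorm s f)), v t = u t := by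
  subst hKs
  exact short_time_existence_general hμ ⟨hSreal, hSsym, hScyc, hSbound⟩ hs hCs hf
    (by rw [one_div]; exact mul_inv_le_one)
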